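/- Let φ be holomorphic and injective on the exterior disk Δ = {z ∈ ℂ : |z| > 1}, with Laurent expansion φ(z) = z + φ₀ + ∑_{k≥1} φ_{-k} z^{-k} at infinity, and let a_{kℓ} be its Grunsky coefficients. For each n ≥ 1 the limit Z̃_n = lim_{r→1+} Z_n(r)/(2π)^n exists in (0, ∞] (since r ↦ E_n(r) is nonincreasing on (1,∞)), and the following are equivalent: (i) ∑_{k,ℓ≥1} kℓ |a_{kℓ}|² < ∞ (i.e. the curve is a Weil–Petersson quasicircle); (ii) limsup_{n→∞} Z̃_n < ∞. -/

import Mathlib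

open MeasureTheory Filter

/-- The partition function `Z_n(γ_r)` of the Coulomb gas (at `β = 2`) on the analytic
curve `γ_r`, the image of the unit circle under `φ_r(z) = φ(rz)/r`:
`Z_n(r) = (1/(n! r^{n(n-1)})) ∫_{[−π,π]^n} ∏_{μ<ν} |φ(re^{iθ_μ}) − φ(re^{iθ_ν})|²
∏_μ |φ'(re^{iθ_μ})| dθ`. -/
noncomputable def Zn (φ : ℂ → ℂ) (n : ℕ) (r : ℝ) : ℝ :=
  (1 / (n.factorial * r ^ (n * (n - 1)))) *
    ∫ θ in Set.pi Set.univ (fun _ : Fin n => Set.Icc (-Real.pi) Real.pi),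
      (∏ p ∈ Finset.univ.filter (fun p : Fin n × Fin n => p.1 < p.2),
        norm (φ ((r : ℂ) * Complex.exp (Complex.I * (θ p.1 : ℂ)))
          - φ ((r : ℂ) * Complex.exp (Complex.I * (θ p.2 : ℂ)))) ^ 2) *
      ∏ μ, norm (deriv φ ((r : ℂ) * Complex.exp (Complex.I * (θ μ : ℂ))))

/-- `E_n(r) = log(Z_n(r)/(2π)^n)`, the "finite `n` Loewner energy" of `γ_r`. -/
noncomputable def En (φ : ℂ → ℂ) (n : ℕ) (r : ℝ) : ℝ :=
  Real.log (Zn φ n r / (2 * Real.pi) ^ n)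

open scoped ENNReal

section GkHelpers
/-! ### Double power series on the bidisk -/

/-- Absolutely convergent on the open unit bidisk. -/
def GkGood (t : ℕ × ℕ → ℂ) : Prop :=
  ∀ ρ : ℝ, 0 ≤ ρ → ρ < 1 → Summable fun p : ℕ × ℕ => ‖t p‖ * ρ ^ (p.1 + p.2)

/-- Sum of the double power series. -/
noncomputable def gkEv (t : ℕ × ℕ → ℂ) (x y : ℂ) : ℂ := ∑' p : ℕ × ℕ, t p * x ^ p.1 * y ^ p.2

theorem GkGood.summable_norm {t : ℕ × ℕ → ℂ} (h : GkGood t) {x y : ℂ} (hx : ‖x‖ < 1)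
    (hy : ‖y‖ < 1) : Summable fun p : ℕ × ℕ => ‖t p * x ^ p.1 * y ^ p.2‖ := by
  refine Summable.of_nonneg_of_le (fun _ => norm_nonneg _) (fun p => ?_)
    (h (max ‖x‖ ‖y‖) (le_max_of_le_left (norm_nonneg _)) (max_lt hx hy))
  rw [norm_mul, norm_mul, norm_pow, norm_pow, pow_add, mul_assoc]
  gcongr
  · exact le_max_left _ _
  · exact le_max_right _ _

theorem GkGood.summable {t : ℕ × ℕ → ℂ} (h : GkGood t) {x y : ℂ} (hx : ‖x‖ < 1)
    (hy : ‖y‖ < 1) : Summable fun p : ℕ × ℕ => t p * x ^ p.1 * y ^ p.2 :=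
  (h.summable_norm hx hy).of_norm

theorem GkGood.of_summable {t : ℕ × ℕ → ℂ}
    (h : ∀ ρ : ℝ, 0 < ρ → ρ < 1 → Summable fun p : ℕ × ℕ => ‖t p‖ * ρ ^ (p.1 + p.2)) :
    GkGood t := by
  intro ρ h0 h1
  refine Summable.of_nonneg_of_le (fun _ => by positivity) (fun p => ?_)
    (h (max ρ (1/2)) (by positivity) (max_lt h1 (by norm_num)))
  gcongr
  exact le_max_left _ _

theorem GkGood.add {s t : ℕ × ℕ → ℂ} (hs : GkGood s) (ht : GkGood t) : GkGood (s + t) := by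
  intro ρ h0 h1
  refine Summable.of_nonneg_of_le (fun _ => by positivity) (fun p => ?_)
    ((hs ρ h0 h1).add (ht ρ h0 h1))
  rw [← add_mul]
  gcongr
  exact norm_add_le _ _

theorem GkGood.smul {t : ℕ × ℕ → ℂ} (ht : GkGood t) (c : ℂ) : GkGood (c • t) := by
  intro ρ h0 h1
  refine ((ht ρ h0 h1).mul_left ‖c‖).congr (fun p => ?_)
  simp [mul_assoc]

theorem gkEv_add {s t : ℕ × ℕ → ℂ} (hs : GkGood s) (ht : GkGood t) {x y : ℂ} (hx : ‖x‖ < 1)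
    (hy : ‖y‖ < 1) : gkEv (s + t) x y = gkEv s x y + gkEv t x y := by
  unfold gkEv
  rw [← (hs.summable hx hy).tsum_add (ht.summable hx hy)]
  refine tsum_congr fun p => ?_
  simp only [Pi.add_apply]; ring

theorem gkEv_smul (c : ℂ) (t : ℕ × ℕ → ℂ) (x y : ℂ) : gkEv (c • t) x y = c * gkEv t x y := by
  unfold gkEv
  rw [← tsum_mul_left]
  refine tsum_congr fun p => ?_
  simp only [Pi.smul_apply, smul_eq_mul]; ring

/-- Multiplication by `x`. -/
def gkShX (t : ℕ × ℕ → ℂ) : ℕ × ℕ → ℂ := fun p => if p.1 = 0 then 0 else t (p.1 - 1, p.2)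

/-- Swap of variables. -/
def gkSwap (t : ℕ × ℕ → ℂ) : ℕ × ℕ → ℂ := fun p => t (p.2, p.1)

/-- Multiplication by `y`. -/
def gkShY (t : ℕ × ℕ → ℂ) : ℕ × ℕ → ℂ := fun p => if p.2 = 0 then 0 else t (p.1, p.2 - 1)

theorem GkGood.swap {t : ℕ × ℕ → ℂ} (ht : GkGood t) : GkGood (gkSwap t) := by
  intro ρ h0 h1
  have := (Equiv.prodComm ℕ ℕ).summable_iff.mpr (ht ρ h0 h1)
  refine this.congr fun p => ?_
  simp [gkSwap, Prod.swap, add_comm]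

theorem gkEv_swap (t : ℕ × ℕ → ℂ) (x y : ℂ) : gkEv (gkSwap t) x y = gkEv t y x := by
  unfold gkEv
  rw [← (Equiv.prodComm ℕ ℕ).tsum_eq (fun p : ℕ × ℕ => t p * y ^ p.1 * x ^ p.2)]
  refine tsum_congr fun p => ?_
  simp [gkSwap, Prod.swap]; ring

theorem gkSuccInj : Function.Injective (fun p : ℕ × ℕ => (p.1 + 1, p.2)) := by
  rintro ⟨a, b⟩ ⟨c, d⟩ h
  simpa using h

theorem gkSucc_range {p : ℕ × ℕ} (h : p ∉ Set.range (fun p : ℕ × ℕ => (p.1 + 1, p.2))) :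
    p.1 = 0 := by
  by_contra h0
  exact h ⟨(p.1 - 1, p.2), by ext <;> simp; omega⟩

theorem GkGood.shX {t : ℕ × ℕ → ℂ} (ht : GkGood t) : GkGood (gkShX t) := by
  intro ρ h0 h1
  rw [← gkSuccInj.summable_iff]
  · refine ((ht ρ h0 h1).mul_left ρ).congr fun p => ?_
    simp [gkShX]; ring
  · intro p hp
    simp [gkShX, gkSucc_range hp]

theorem gkEv_shX (t : ℕ × ℕ → ℂ) (x y : ℂ) : gkEv (gkShX t) x y = x * gkEv t x y := by
  unfold gkEv
  rw [← gkSuccInj.tsum_eq, ← tsum_mul_left]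
  · refine tsum_congr fun p => ?_
    simp [gkShX]; ring
  · intro p hp
    by_contra h
    simp [gkShX, gkSucc_range h] at hp

theorem gkShY_eq (t : ℕ × ℕ → ℂ) : gkShY t = gkSwap (gkShX (gkSwap t)) := by
  ext p; simp [gkShY, gkSwap, gkShX]

theorem GkGood.shY {t : ℕ × ℕ → ℂ} (ht : GkGood t) : GkGood (gkShY t) := by
  rw [gkShY_eq]; exact ht.swap.shX.swap

theorem gkEv_shY (t : ℕ × ℕ → ℂ) (x y : ℂ) : gkEv (gkShY t) x y = y * gkEv t x y := by
  rw [gkShY_eq, gkEv_swap, gkEv_shX, gkEv_swap]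

/-- `x`-derivative. -/
def gkDx (t : ℕ × ℕ → ℂ) : ℕ × ℕ → ℂ := fun p => ((p.1 : ℂ) + 1) * t (p.1 + 1, p.2)

/-- `y`-derivative. -/
def gkDy (t : ℕ × ℕ → ℂ) : ℕ × ℕ → ℂ := fun p => ((p.2 : ℂ) + 1) * t (p.1, p.2 + 1)

theorem gk_mul_pow_bound {ρ σ : ℝ} (h0 : 0 ≤ ρ) (h1 : ρ < σ) :
    ∃ C : ℝ, ∀ i : ℕ, ((i : ℝ) + 1) * ρ ^ i ≤ C * σ ^ (i + 1) := by
  have hσ : 0 < σ := lt_of_le_of_lt h0 h1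
  have hq : ‖ρ / σ‖ < 1 := by
    rw [Real.norm_of_nonneg (by positivity), div_lt_one hσ]; exact h1
  have hs : Summable fun i : ℕ => ((i : ℝ) + 1) * (ρ / σ) ^ i := by
    have a := summable_pow_mul_geometric_of_norm_lt_one 1 hq
    have b := summable_geometric_of_norm_lt_one hq
    refine (a.add b).congr fun i => ?_
    ring
  obtain ⟨C, hC⟩ := hs.tendsto_atTop_zero.bddAbove_range
  refine ⟨C / σ, fun i => ?_⟩
  have := hC ⟨i, rfl⟩
  simp only [div_pow] at this
  have h2 : ((i : ℝ) + 1) * ρ ^ i ≤ C * σ ^ i := by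
    rw [← mul_div_assoc, div_le_iff₀ (by positivity)] at this
    exact this
  calc _ ≤ C * σ ^ i := h2
    _ = _ := by field_simp; ring

theorem GkGood.dx {t : ℕ × ℕ → ℂ} (ht : GkGood t) : GkGood (gkDx t) := by
  intro ρ h0 h1
  obtain ⟨σ, h2, h3⟩ := exists_between h1
  obtain ⟨C, hC⟩ := gk_mul_pow_bound h0 h2
  have := (gkSuccInj.summable_iff (f := fun p : ℕ × ℕ => ‖gkShX (fun q => t (q.1+1,q.2)) p‖ * σ ^ (p.1 + p.2)) ?_).mpr ?_
  · refine Summable.of_nonneg_of_le (fun _ => by positivity) (fun p => ?_) (this.mul_left C)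
    have e : ‖((p.1 : ℂ) + 1)‖ = (p.1 : ℝ) + 1 := by
      rw [← Nat.cast_succ, Complex.norm_natCast]; simp
    simp only [gkDx, norm_mul, e, Function.comp, gkShX]
    simp only [Nat.add_eq_zero_iff, one_ne_zero, and_false, if_false, Nat.add_sub_cancel]
    calc _ = ‖t (p.1 + 1, p.2)‖ * (((p.1 : ℝ) + 1) * ρ ^ p.1) * ρ ^ p.2 := by ring
      _ ≤ ‖t (p.1 + 1, p.2)‖ * (C * σ ^ (p.1 + 1)) * σ ^ p.2 := by
        have := hC p.1
        have h5 : 0 ≤ C * σ ^ (p.1 + 1) := le_trans (by positivity) this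
        gcongr
      _ = _ := by ring
  · intro p hp
    simp [gkShX, gkSucc_range hp]
  · refine Summable.of_nonneg_of_le (fun _ => by have := h0.trans h2.le; positivity)
      (fun p => ?_) (ht σ (h0.trans h2.le) h3)
    have := h0.trans h2.le
    gcongr
    by_cases h : p.1 = 0
    · simp [gkShX, h]
    · simp only [gkShX, h, if_false]
      rw [Nat.sub_add_cancel (Nat.one_le_iff_ne_zero.mpr h)]

theorem gkDy_eq (t : ℕ × ℕ → ℂ) : gkDy t = gkSwap (gkDx (gkSwap t)) := by
  ext p; simp [gkDy, gkSwap, gkDx]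

theorem GkGood.dy {t : ℕ × ℕ → ℂ} (ht : GkGood t) : GkGood (gkDy t) := by
  rw [gkDy_eq]; exact ht.swap.dx.swap

theorem gkEv_dx_eq (t : ℕ × ℕ → ℂ) (x y : ℂ) :
    gkEv (gkDx t) x y = ∑' p : ℕ × ℕ, t p * (p.1 * x ^ (p.1 - 1)) * y ^ p.2 := by
  unfold gkEv
  rw [← gkSuccInj.tsum_eq (f := fun p : ℕ × ℕ => t p * (p.1 * x ^ (p.1 - 1)) * y ^ p.2)]
  · refine tsum_congr fun p => ?_
    simp [gkDx]; left; ring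
  · intro p hp
    by_contra h
    simp [gkSucc_range h] at hp

theorem GkGood.hasDerivAt_x {t : ℕ × ℕ → ℂ} (ht : GkGood t) {x y : ℂ} (hx : ‖x‖ < 1)
    (hy : ‖y‖ < 1) : HasDerivAt (fun w => gkEv t w y) (gkEv (gkDx t) x y) x := by
  obtain ⟨R, hR, hR1⟩ := exists_between hx
  have hR0 : 0 ≤ R := (norm_nonneg x).trans hR.le
  rw [gkEv_dx_eq]
  have hRn : ‖(R : ℂ)‖ < 1 := by simpa [abs_of_nonneg hR0] using hR1
  have hu : Summable fun p : ℕ × ℕ => ‖t p‖ * (p.1 * R ^ (p.1 - 1)) * ‖y‖ ^ p.2 := by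
    rw [← gkSuccInj.summable_iff]
    · refine (ht.dx.summable_norm hRn hy).congr fun p => ?_
      have e : ‖((p.1 : ℂ) + 1)‖ = (p.1 : ℝ) + 1 := by
        rw [← Nat.cast_succ, Complex.norm_natCast]; simp
      simp [gkDx, e, abs_of_nonneg hR0]; left; ring
    · intro p hp
      simp [gkSucc_range hp]
  show HasDerivAt (fun w => ∑' p : ℕ × ℕ, t p * w ^ p.1 * y ^ p.2) _ _
  refine hasDerivAt_tsum_of_isPreconnected (g := fun (p : ℕ × ℕ) (w : ℂ) => t p * w ^ p.1 * y ^ p.2)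
    (g' := fun (p : ℕ × ℕ) (x : ℂ) => t p * (p.1 * x ^ (p.1 - 1)) * y ^ p.2) hu (t := Metric.ball (0 : ℂ) R) Metric.isOpen_ball
    (convex_ball _ _).isPreconnected (y₀ := x) ?_ ?_ ?_ ?_ ?_
  · intro p w hw
    exact ((hasDerivAt_pow p.1 w).const_mul (t p)).mul_const (y ^ p.2)
  · intro p w hw
    have hw' : ‖w‖ ≤ R := by simpa using (Metric.mem_ball.mp hw).le
    rw [norm_mul, norm_mul, norm_mul, norm_pow, norm_pow, Complex.norm_natCast]
    gcongr
  · simpa using hR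
  · exact ht.summable hx hy
  · simpa using hR

theorem GkGood.hasDerivAt_y {t : ℕ × ℕ → ℂ} (ht : GkGood t) {x y : ℂ} (hx : ‖x‖ < 1)
    (hy : ‖y‖ < 1) : HasDerivAt (fun w => gkEv t x w) (gkEv (gkDy t) x y) y := by
  have := ht.swap.hasDerivAt_x hy hx
  simp only [gkEv_swap] at this
  rw [gkDy_eq, gkEv_swap]
  exact this

/-! ### Products -/

instance gkAntidiag : Finset.HasAntidiagonal (ℕ × ℕ) where
  antidiagonal n := (Finset.HasAntidiagonal.antidiagonal n.1 ×ˢ Finset.HasAntidiagonal.antidiagonal n.2).image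
    (fun q => ((q.1.1, q.2.1), (q.1.2, q.2.2)))
  mem_antidiagonal := by
    rintro ⟨n1, n2⟩ ⟨⟨a, b⟩, ⟨c, d⟩⟩
    simp only [Finset.mem_image, Finset.mem_product, Finset.HasAntidiagonal.mem_antidiagonal, Prod.mk.injEq,
      Prod.exists, Prod.mk_add_mk]
    constructor
    · rintro ⟨a', c', b', d', ⟨h1, h2⟩, ⟨rfl, rfl⟩, rfl, rfl⟩
      exact ⟨h1, h2⟩
    · rintro ⟨h1, h2⟩
      exact ⟨a, c, b, d, ⟨h1, h2⟩, ⟨rfl, rfl⟩, rfl, rfl⟩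

theorem gk_card_antidiag (n : ℕ × ℕ) :
    (Finset.HasAntidiagonal.antidiagonal n).card ≤ (n.1 + 1) * (n.2 + 1) := by
  change ((Finset.HasAntidiagonal.antidiagonal n.1 ×ˢ
    Finset.HasAntidiagonal.antidiagonal n.2).image
    (fun q => ((q.1.1, q.2.1), (q.1.2, q.2.2)))).card ≤ _
  refine Finset.card_image_le.trans ?_
  simp

/-- Convolution. -/
noncomputable def gkConv (s t : ℕ × ℕ → ℂ) : ℕ × ℕ → ℂ :=
  fun n => ∑ q ∈ Finset.HasAntidiagonal.antidiagonal n, s q.1 * t q.2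

theorem gk_cauchy_summable {f g : ℕ × ℕ → ℝ} (hf : Summable f) (hg : Summable g)
    (hf0 : ∀ p, 0 ≤ f p) (hg0 : ∀ p, 0 ≤ g p) :
    Summable fun n : ℕ × ℕ => ∑ q ∈ Finset.HasAntidiagonal.antidiagonal n, f q.1 * g q.2 :=
  summable_sum_mul_antidiagonal_of_summable_mul (A := ℕ × ℕ) (f := f) (g := g)
    (hf.mul_of_nonneg hg hf0 hg0)

theorem gk_cauchy_tsum {f g : ℕ × ℕ → ℂ} (hf : Summable fun p => ‖f p‖)
    (hg : Summable fun p => ‖g p‖) :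
    (∑' p, f p) * (∑' p, g p)
      = ∑' n : ℕ × ℕ, ∑ q ∈ Finset.HasAntidiagonal.antidiagonal n, f q.1 * g q.2 :=
  Summable.tsum_mul_tsum_eq_tsum_sum_antidiagonal (A := ℕ × ℕ) (f := f) (g := g)
    hf.of_norm hg.of_norm (summable_mul_of_summable_norm hf hg)

theorem GkGood.conv {s t : ℕ × ℕ → ℂ} (hs : GkGood s) (ht : GkGood t) : GkGood (gkConv s t) := by
  intro ρ h0 h1
  have h := gk_cauchy_summable (hs ρ h0 h1) (ht ρ h0 h1) (fun p => by positivity)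
    (fun p => by positivity)
  refine Summable.of_nonneg_of_le (fun p => by positivity) (fun p => ?_) h
  unfold gkConv
  calc _ ≤ (∑ q ∈ Finset.HasAntidiagonal.antidiagonal p, ‖s q.1 * t q.2‖) * ρ ^ (p.1 + p.2) := by
        gcongr; exact norm_sum_le _ _
    _ = _ := by
        rw [Finset.sum_mul]
        refine Finset.sum_congr rfl fun q hq => ?_
        rw [Finset.HasAntidiagonal.mem_antidiagonal] at hq
        rw [← hq, norm_mul, Prod.fst_add, Prod.snd_add]
        ring

theorem gkEv_conv {s t : ℕ × ℕ → ℂ} (hs : GkGood s) (ht : GkGood t) {x y : ℂ} (hx : ‖x‖ < 1)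
    (hy : ‖y‖ < 1) : gkEv (gkConv s t) x y = gkEv s x y * gkEv t x y := by
  unfold gkEv
  rw [gk_cauchy_tsum (hs.summable_norm hx hy) (ht.summable_norm hx hy)]
  refine tsum_congr fun p => ?_
  rw [gkConv, Finset.sum_mul, Finset.sum_mul]
  refine Finset.sum_congr rfl fun q hq => ?_
  rw [Finset.HasAntidiagonal.mem_antidiagonal] at hq
  rw [← hq, Prod.fst_add, Prod.snd_add]
  ring

/-! ### Uniqueness -/

theorem gk_unique_one {c : ℕ → ℂ} {ε : ℝ} (hε : 0 < ε)
    (h : ∀ x : ℂ, x ≠ 0 → ‖x‖ < ε → HasSum (fun k => c k * x ^ k) 0) (k : ℕ) : c k = 0 := by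
  set p := FormalMultilinearSeries.ofScalars ℂ c with hp
  have hsum : ∀ x : ℂ, p.sum x = ∑' k, c k * x ^ k := by
    intro x
    simp [hp, FormalMultilinearSeries.sum, smul_eq_mul, mul_comm]
  have hr : 0 < p.radius := by
    have e2 : 0 < ε / 2 := by positivity
    have hs := (h ((ε / 2 : ℝ) : ℂ) (by exact_mod_cast e2.ne') (by
      rw [Complex.norm_real, Real.norm_of_nonneg e2.le]; linarith)).summable.norm
    have := p.le_radius_of_summable_norm (r := Real.toNNReal (ε / 2)) (hs.congr fun n => by
      rw [hp, FormalMultilinearSeries.ofScalars_norm, norm_mul, norm_pow, Complex.norm_real,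
        Real.norm_of_nonneg e2.le, Real.coe_toNNReal _ e2.le])
    refine lt_of_lt_of_le ?_ this
    rw [ENNReal.coe_pos]; simpa using hε
  have hb := (p.hasFPowerSeriesOnBall hr).hasFPowerSeriesAt
  have hz : ∀ᶠ x in nhdsWithin (0:ℂ) {0}ᶜ, p.sum x = 0 := by
    have : ∀ᶠ x in nhdsWithin (0:ℂ) {0}ᶜ, ‖x‖ < ε := by
      apply mem_nhdsWithin_of_mem_nhds
      filter_upwards [Metric.ball_mem_nhds (0:ℂ) hε] with x hx
      simpa using hx
    filter_upwards [this, self_mem_nhdsWithin] with x hx hx0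
    rw [hsum]; exact (h x hx0 hx).tsum_eq
  have h0 : p.sum 0 = 0 := by
    have h1 := hb.continuousAt.tendsto.mono_left (nhdsWithin_le_nhds (s := {0}ᶜ))
    have h2 : Tendsto p.sum (nhdsWithin (0:ℂ) {0}ᶜ) (nhds 0) :=
      tendsto_const_nhds.congr' (hz.mono fun _ hx => hx.symm)
    exact tendsto_nhds_unique h1 h2
  have hall : p.sum =ᶠ[nhds 0] (0 : ℂ → ℂ) := by
    rw [eventually_nhdsWithin_iff] at hz
    filter_upwards [hz] with x hx
    by_cases hx0 : x = 0
    · rw [hx0, h0]; rfl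
    · exact hx hx0
  have hp0 := (hb.congr hall).eq_zero
  have := congrArg (fun q => q k) hp0
  simpa [hp, FormalMultilinearSeries.ofScalars, ] using congrArg (fun f => f (fun _ => 1)) this

theorem gk_unique_two {t : ℕ × ℕ → ℂ} (ht : GkGood t) {ε : ℝ} (hε : 0 < ε) (hε1 : ε ≤ 1)
    (h : ∀ x y : ℂ, x ≠ 0 → y ≠ 0 → x ≠ y → ‖x‖ < ε → ‖y‖ < ε → gkEv t x y = 0) : t = 0 := by
  have h1 : ∀ x : ℂ, x ≠ 0 → ‖x‖ < ε → ∀ l, HasSum (fun k => t (k, l) * x ^ k) 0 := by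
    intro x hx hxe
    have hx1 := hxe.trans_le hε1
    have hsx : ∀ l, Summable (fun k => t (k, l) * x ^ k) := by
      intro l
      have h2 : ‖(1/2 : ℂ)‖ < 1 := by norm_num
      have := (ht.summable hx1 h2).comp_injective (i := fun k : ℕ => (k, l))
        (fun a b hab => by simpa using hab)
      have := this.mul_right (((1/2 : ℂ) ^ l)⁻¹)
      refine this.congr fun k => ?_
      simp only [Function.comp]
      field_simp
    have key := gk_unique_one (c := fun l => ∑' k, t (k, l) * x ^ k) (ε := ‖x‖)
      (norm_pos_iff.mpr hx) ?_
    · intro l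
      have := key l
      rw [← this]; exact (hsx l).hasSum
    · intro y hy hyx
      have hy1 := hyx.trans hx1
      have hS := (ht.summable hx1 hy1)
      have h3 : gkEv t x y = 0 := h x y hx hy (by rintro rfl; exact lt_irrefl _ hyx) hxe
        (hyx.trans hxe)
      have h4 := hS.hasSum
      rw [show ∑' p : ℕ × ℕ, t p * x ^ p.1 * y ^ p.2 = 0 from h3] at h4
      have h5 := (Equiv.prodComm ℕ ℕ).hasSum_iff.mpr h4
      refine h5.prod_fiberwise (fun l => ?_)
      exact (hsx l).hasSum.mul_right (y ^ l)
  ext ⟨k, l⟩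
  exact gk_unique_one hε (c := fun k => t (k, l)) (fun x hx hxe => h1 x hx hxe l) k

/-! ### The finite-dimensional exponential inequality -/

open scoped ComplexConjugate

theorem gk_gram_pow {ι κ : Type*} [Fintype ι] [Fintype κ] (lam : ι → ℂ) (V : ι → κ → ℂ) (n : ℕ) :
    ((∑ K : Fin n → κ, ‖∑ p, lam p * ∏ i, V p (K i)‖ ^ 2 : ℝ) : ℂ)
      = ∑ p, ∑ q, lam p * conj (lam q) * (∑ c, V p c * conj (V q c)) ^ n := by
  push_cast
  simp_rw [Fintype.sum_pow, Finset.mul_sum]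
  have : ∀ K : Fin n → κ, ((‖∑ p, lam p * ∏ i, V p (K i)‖ : ℝ) : ℂ) ^ 2
      = ∑ p, ∑ q, lam p * conj (lam q) * ∏ i, V p (K i) * conj (V q (K i)) := by
    intro K
    rw [← Complex.mul_conj', map_sum, Finset.sum_mul_sum]
    refine Finset.sum_congr rfl fun p _ => Finset.sum_congr rfl fun q _ => ?_
    rw [map_mul, map_prod, Finset.prod_mul_distrib]
    ring
  simp_rw [this]
  rw [Finset.sum_comm]
  refine Finset.sum_congr rfl fun p _ => ?_
  rw [Finset.sum_comm]

theorem gk_fact_bound (m : ℕ) : (((2 * m).factorial : ℕ) : ℝ) ≤ 4 ^ m * (m.factorial : ℝ) ^ 2 := by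
  have h := Nat.choose_mul_factorial_mul_factorial (show m ≤ 2 * m by omega)
  have h2 : 2 * m - m = m := by omega
  rw [h2] at h
  have h3 : (2 * m).choose m ≤ 2 ^ (2 * m) := Nat.choose_le_two_pow _ _
  rw [pow_mul] at h3
  have h4 : (2 * m).factorial ≤ 4 ^ m * m.factorial ^ 2 := by
    rw [← h, mul_assoc, ← sq]
    exact Nat.mul_le_mul_right _ (by simpa using h3)
  exact_mod_cast h4

theorem gk_fin_ineq {ι κ : Type*} [Fintype ι] [Fintype κ] (lam : ι → ℂ) (U : ι → κ → ℂ)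
    (b : κ × κ → ℂ) (hb : ∑ c, ‖b c‖ ^ 2 ≤ 1 / 4) :
    ‖∑ p, lam p * (Complex.exp (-(1/2) * ∑ c, b c * (U p c.1 * U p c.2)) - 1)‖ ^ 2
      ≤ (∑ p, ∑ q, lam p * conj (lam q)
          * (Complex.exp (∑ k, U p k * conj (U q k)) - 1)).re := by
  set L : ι → ι → ℂ := fun p q => ∑ k, U p k * conj (U q k) with hL
  set A : ι → ℂ := fun p => ∑ c, b c * (U p c.1 * U p c.2) with hA
  set Q : ℝ := (∑ p, ∑ q, lam p * conj (lam q) * (Complex.exp (L p q) - 1)).re with hQ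
  set qn : ℕ → ℝ := fun n => ∑ K : Fin n → κ, ‖∑ p, lam p * ∏ i, U p (K i)‖ ^ 2 with hqn
  have hq0 : ∀ n, 0 ≤ qn n := fun n => by positivity
  have hqC : ∀ n, (qn n : ℂ) = ∑ p, ∑ q, lam p * conj (lam q) * L p q ^ n :=
    fun n => gk_gram_pow lam U n
  have hexp : ∀ z : ℂ, HasSum (fun n : ℕ => z ^ (n + 1) / (n + 1).factorial)
      (Complex.exp z - 1) := by
    intro z
    have h := NormedSpace.expSeries_div_hasSum_exp z
    rw [← Complex.exp_eq_exp_ℂ] at h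
    have h2 := (hasSum_nat_add_iff' 1).mpr h
    simpa using h2
  -- the sum of `q_n / n!`
  have hQs : HasSum (fun n : ℕ => qn (n + 1) / (n + 1).factorial) Q := by
    have h1 : HasSum (fun n : ℕ => ∑ p, ∑ q, lam p * conj (lam q)
        * (L p q ^ (n + 1) / (n + 1).factorial))
        (∑ p, ∑ q, lam p * conj (lam q) * (Complex.exp (L p q) - 1)) := by
      refine hasSum_sum fun p _ => hasSum_sum fun q _ => ?_
      exact (hexp (L p q)).mul_left _
    have h2 := Complex.hasSum_re h1
    refine h2.congr_fun ?_ |> fun h => h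
    intro n
    have h3 : ((qn (n + 1) / (n + 1).factorial : ℝ) : ℂ) = ∑ p, ∑ q, lam p * conj (lam q)
        * (L p q ^ (n + 1) / (n + 1).factorial) := by
      push_cast
      rw [hqC, Finset.sum_div]
      refine Finset.sum_congr rfl fun p _ => ?_
      rw [Finset.sum_div]
      refine Finset.sum_congr rfl fun q _ => ?_
      rw [mul_div_assoc]
    rw [← h3, Complex.ofReal_re]
  have hQn : ∀ n, qn (n + 1) ≤ (n + 1).factorial * Q := by
    intro n
    have h := hQs.summable.le_tsum n (fun j _ => div_nonneg (hq0 _) (by positivity))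
    rw [hQs.tsum_eq, div_le_iff₀ (by positivity)] at h
    linarith
  have hQ0 : 0 ≤ Q := by
    rw [← hQs.tsum_eq]; exact tsum_nonneg fun n => div_nonneg (hq0 _) (by positivity)
  -- powers of `A`
  have hApow : ∀ m, ‖∑ p, lam p * A p ^ m‖ ^ 2 ≤ (1 / 4) ^ m * qn (2 * m) := by
    intro m
    set V : ι → κ × κ → ℂ := fun p c => U p c.1 * U p c.2 with hV
    have h1 : ∑ p, lam p * A p ^ m
        = ∑ K : Fin m → κ × κ, (∏ i, b (K i)) * ∑ p, lam p * ∏ i, V p (K i) := by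
      simp_rw [hA, Fintype.sum_pow, Finset.mul_sum]
      rw [Finset.sum_comm]
      refine Finset.sum_congr rfl fun K _ => Finset.sum_congr rfl fun p _ => ?_
      rw [Finset.prod_mul_distrib]; ring
    have h2 : ∑ K : Fin m → κ × κ, ‖∑ p, lam p * ∏ i, V p (K i)‖ ^ 2 = qn (2 * m) := by
      have h3 := gk_gram_pow lam V m
      have h4 : ∀ p q, ∑ c, V p c * conj (V q c) = L p q ^ 2 := by
        intro p q
        simp only [hL, hV]
        rw [sq, Fintype.sum_mul_sum, Fintype.sum_prod_type]
        refine Finset.sum_congr rfl fun c _ => Finset.sum_congr rfl fun d _ => ?_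
        rw [map_mul]; ring
      simp_rw [h4, ← pow_mul] at h3
      rw [← hqC] at h3
      exact_mod_cast h3
    rw [h1, ← h2]
    calc _ ≤ (∑ K : Fin m → κ × κ, ‖∏ i, b (K i)‖ * ‖∑ p, lam p * ∏ i, V p (K i)‖) ^ 2 := by
          gcongr
          refine (norm_sum_le _ _).trans (le_of_eq ?_)
          simp_rw [norm_mul]
      _ ≤ (∑ K : Fin m → κ × κ, ‖∏ i, b (K i)‖ ^ 2) *
          ∑ K : Fin m → κ × κ, ‖∑ p, lam p * ∏ i, V p (K i)‖ ^ 2 :=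
          Finset.sum_mul_sq_le_sq_mul_sq _ _ _
      _ ≤ _ := by
          gcongr
          have : ∑ K : Fin m → κ × κ, ‖∏ i, b (K i)‖ ^ 2 = (∑ c, ‖b c‖ ^ 2) ^ m := by
            rw [Fintype.sum_pow]
            refine Finset.sum_congr rfl fun K _ => ?_
            rw [norm_prod, Finset.prod_pow]
          rw [this]
          gcongr
  have hAn : ∀ m : ℕ, ‖∑ p, lam p * A p ^ (m + 1)‖ ≤ (m + 1).factorial * Real.sqrt Q := by
    intro m
    apply le_of_sq_le_sq _ (by positivity)
    rw [mul_pow, Real.sq_sqrt hQ0]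
    refine (hApow (m + 1)).trans ?_
    have h1 := hQn (2 * m + 1)
    rw [show 2 * m + 1 + 1 = 2 * (m + 1) by ring] at h1
    calc _ ≤ (1 / 4) ^ (m + 1) * (4 ^ (m + 1) * ((m + 1).factorial : ℝ) ^ 2 * Q) := by
          gcongr
          refine h1.trans ?_
          gcongr
          exact gk_fact_bound _
      _ = _ := by
          rw [one_div, inv_pow]; field_simp
  -- conclusion
  have hfin : HasSum (fun m : ℕ => ∑ p, lam p * ((-(1/2) * A p) ^ (m + 1) / (m + 1).factorial))
      (∑ p, lam p * (Complex.exp (-(1/2) * A p) - 1)) :=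
    hasSum_sum fun p _ => (hexp _).mul_left _
  have hbd : ‖∑ p, lam p * (Complex.exp (-(1/2) * A p) - 1)‖ ≤ Real.sqrt Q := by
    have hg : HasSum (fun m : ℕ => Real.sqrt Q * (1 / 2 / 2 ^ m)) (Real.sqrt Q) := by
      simpa using (hasSum_geometric_two' (1 : ℝ)).mul_left (Real.sqrt Q)
    refine hfin.norm_le_of_bounded hg fun m => ?_
    have : ∑ p, lam p * ((-(1/2) * A p) ^ (m + 1) / (m + 1).factorial)
        = ((-(1/2)) ^ (m + 1) / (m + 1).factorial) * ∑ p, lam p * A p ^ (m + 1) := by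
      rw [Finset.mul_sum]
      refine Finset.sum_congr rfl fun p _ => ?_
      rw [mul_pow]; ring
    rw [this, norm_mul, norm_div, norm_pow, norm_neg, Complex.norm_natCast]
    have h5 : ‖(1 / 2 : ℂ)‖ = 1 / 2 := by norm_num
    rw [h5]
    calc _ ≤ (1 / 2) ^ (m + 1) / (m + 1).factorial * ((m + 1).factorial * Real.sqrt Q) := by
          gcongr; exact hAn m
      _ = _ := by
          have : ((m + 1).factorial : ℝ) ≠ 0 := by positivity
          rw [div_pow, one_pow, pow_succ]
          field_simp
  calc _ ≤ Real.sqrt Q ^ 2 := by gcongr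
    _ = Q := Real.sq_sqrt hQ0

open scoped ComplexConjugate

/-! ### The infinite version of the inequality -/

/-- The quadratic form in `x^k - y^k`. -/
noncomputable def gkA (α : ℕ × ℕ → ℂ) (x y : ℂ) : ℂ :=
  ∑' p : ℕ × ℕ, α p * ((x ^ (p.1 + 1) - y ^ (p.1 + 1)) * (x ^ (p.2 + 1) - y ^ (p.2 + 1)))

theorem gkA_term (α : ℕ × ℕ → ℂ) (x y : ℂ) (p : ℕ × ℕ) :
    α p * ((x ^ (p.1 + 1) - y ^ (p.1 + 1)) * (x ^ (p.2 + 1) - y ^ (p.2 + 1)))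
      = x * x * (α p * x ^ p.1 * x ^ p.2) + y * y * (α p * y ^ p.1 * y ^ p.2)
        - x * y * (α p * x ^ p.1 * y ^ p.2) - y * x * (α p * y ^ p.1 * x ^ p.2) := by
  ring

theorem gkA_hasSum {α : ℕ × ℕ → ℂ} (h : GkGood α) {x y : ℂ} (hx : ‖x‖ < 1) (hy : ‖y‖ < 1) :
    HasSum (fun p : ℕ × ℕ =>
      α p * ((x ^ (p.1 + 1) - y ^ (p.1 + 1)) * (x ^ (p.2 + 1) - y ^ (p.2 + 1))))
      (x * x * gkEv α x x + y * y * gkEv α y y - x * y * gkEv α x y - y * x * gkEv α y x) := by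
  simp_rw [gkA_term]
  exact ((((h.summable hx hx).hasSum.mul_left _).add ((h.summable hy hy).hasSum.mul_left _)).sub
    ((h.summable hx hy).hasSum.mul_left _)).sub ((h.summable hy hx).hasSum.mul_left _)

theorem gkA_eq {α : ℕ × ℕ → ℂ} (h : GkGood α) {x y : ℂ} (hx : ‖x‖ < 1) (hy : ‖y‖ < 1) :
    gkA α x y
      = x * x * gkEv α x x + y * y * gkEv α y y - x * y * gkEv α x y - y * x * gkEv α y x :=
  (gkA_hasSum h hx hy).tsum_eq

theorem GkGood.of_bounded {t : ℕ × ℕ → ℂ} {C : ℝ} (h : ∀ p, ‖t p‖ ≤ C) : GkGood t := by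
  intro ρ h0 h1
  have hs : Summable fun p : ℕ × ℕ => ρ ^ p.1 * ρ ^ p.2 :=
    (summable_geometric_of_lt_one h0 h1).mul_of_nonneg (summable_geometric_of_lt_one h0 h1)
      (fun _ => by positivity) (fun _ => by positivity)
  refine Summable.of_nonneg_of_le (fun p => by positivity) (fun p => ?_) (hs.mul_left C)
  rw [pow_add]
  gcongr
  exact h p

theorem GkGood.of_sq {t : ℕ × ℕ → ℂ} (h : Summable fun p => ‖t p‖ ^ 2) : GkGood t := by
  refine GkGood.of_bounded (C := ∑' p, ‖t p‖ ^ 2 + 1) fun p => ?_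
  have h1 := h.le_tsum p (fun j _ => by positivity)
  nlinarith [sq_nonneg (‖t p‖ - 1)]

/-- The weight `kl |a_kl|^2`. -/
def GkHS (α : ℕ × ℕ → ℂ) : Prop :=
  Summable fun p : ℕ × ℕ => ((p.1 : ℝ) + 1) * ((p.2 : ℝ) + 1) * ‖α p‖ ^ 2

theorem GkHS.good {α : ℕ × ℕ → ℂ} (h : GkHS α) : GkGood α := by
  refine GkGood.of_sq (Summable.of_nonneg_of_le (fun p => by positivity) (fun p => ?_) h)
  have h1 : (1 : ℝ) ≤ ((p.1 : ℝ) + 1) * ((p.2 : ℝ) + 1) := by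
    have := (p.1).cast_nonneg (α := ℝ)
    have := (p.2).cast_nonneg (α := ℝ)
    nlinarith
  nlinarith [sq_nonneg ‖α p‖]

theorem gk_hasSum_log {z : ℂ} (hz : ‖z‖ < 1) :
    HasSum (fun k : ℕ => z ^ (k + 1) / ((k : ℂ) + 1)) (-Complex.log (1 - z)) := by
  have h := Complex.hasSum_taylorSeries_neg_log hz
  have h2 := (hasSum_nat_add_iff' 1).mpr h
  simpa using h2

theorem gk_one_sub_ne {z : ℂ} (hz : ‖z‖ < 1) : 1 - z ≠ 0 := by
  intro h
  have : z = 1 := by linear_combination -h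
  rw [this] at hz; simp at hz

theorem gk_norm_mul_conj {x y : ℂ} (hx : ‖x‖ < 1) (hy : ‖y‖ < 1) : ‖x * conj y‖ < 1 := by
  rw [norm_mul, RCLike.norm_conj]
  nlinarith [norm_nonneg x, norm_nonneg y]

theorem gk_exp_L {x y x' y' : ℂ} (hx : ‖x‖ < 1) (hy : ‖y‖ < 1) (hx' : ‖x'‖ < 1)
    (hy' : ‖y'‖ < 1) :
    ∃ L : ℂ, HasSum (fun k : ℕ => (x ^ (k + 1) - y ^ (k + 1)) * conj (x' ^ (k + 1) - y' ^ (k + 1))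
      / ((k : ℂ) + 1)) L ∧ Complex.exp L - 1 = ((y - x) * conj (y' - x')) *
        ((1 - x * conj x')⁻¹ * (1 - y * conj y')⁻¹) := by
  have h1 := gk_norm_mul_conj hx hx'
  have h2 := gk_norm_mul_conj hx hy'
  have h3 := gk_norm_mul_conj hy hx'
  have h4 := gk_norm_mul_conj hy hy'
  refine ⟨_, ((((gk_hasSum_log h1).add (gk_hasSum_log h4)).sub (gk_hasSum_log h2)).sub
    (gk_hasSum_log h3)).congr_fun ?_ |> fun h => h, ?_⟩
  · intro k
    simp only [map_sub, map_pow]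
    ring
  · have n1 := gk_one_sub_ne h1
    have n2 := gk_one_sub_ne h2
    have n3 := gk_one_sub_ne h3
    have n4 := gk_one_sub_ne h4
    rw [Complex.exp_sub, Complex.exp_sub, Complex.exp_add, Complex.exp_neg, Complex.exp_neg,
      Complex.exp_neg, Complex.exp_neg, Complex.exp_log n1, Complex.exp_log n2, Complex.exp_log n3,
      Complex.exp_log n4]
    field_simp
    rw [map_sub]
    ring

/-- The open bidisk. -/
abbrev GkD := {q : ℂ × ℂ // ‖q.1‖ < 1 ∧ ‖q.2‖ < 1}

theorem gk_inf_ineq {ι : Type*} [Fintype ι] (lam : ι → ℂ) (P : ι → GkD)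
    {α : ℕ × ℕ → ℂ} (hα : GkHS α)
    (hα4 : ∑' p : ℕ × ℕ, ((p.1 : ℝ) + 1) * ((p.2 : ℝ) + 1) * ‖α p‖ ^ 2 ≤ 1 / 4) :
    ‖∑ p, lam p * (Complex.exp (-(1/2) * gkA α (P p).1.1 (P p).1.2) - 1)‖ ^ 2
      ≤ (∑ p, ∑ q, lam p * conj (lam q) *
        (((P p).1.2 - (P p).1.1) * conj ((P q).1.2 - (P q).1.1) *
        ((1 - (P p).1.1 * conj (P q).1.1)⁻¹ * (1 - (P p).1.2 * conj (P q).1.2)⁻¹))).re := by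
  choose L hL hL2 using fun p q => gk_exp_L (P p).2.1 (P p).2.2 (P q).2.1 (P q).2.2
  simp_rw [← hL2]
  set w : ℕ → ℂ := fun k => ((Real.sqrt ((k : ℝ) + 1) : ℝ) : ℂ) with hw
  have hwsq : ∀ k, w k * w k = (k : ℂ) + 1 := by
    intro k
    simp only [hw]
    rw [← Complex.ofReal_mul, Real.mul_self_sqrt (by positivity)]
    push_cast; rfl
  have hw0 : ∀ k, w k ≠ 0 := by
    intro k h
    have := hwsq k
    rw [h, zero_mul] at this
    exact Nat.cast_add_one_ne_zero k this.symm
  have hwc : ∀ k, conj (w k) = w k := fun k => Complex.conj_ofReal _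
  -- truncated inequality
  have hfin := fun d : ℕ => gk_fin_ineq lam
    (fun (p : ι) (k : Fin d) => ((P p).1.1 ^ (k.1 + 1) - (P p).1.2 ^ (k.1 + 1)) / w k)
    (fun c : Fin d × Fin d => w c.1 * w c.2 * α (c.1, c.2)) (by
      have e : ∀ c : Fin d × Fin d, ‖w c.1 * w c.2 * α (c.1, c.2)‖ ^ 2
          = (((c.1 : ℕ) : ℝ) + 1) * (((c.2 : ℕ) : ℝ) + 1) * ‖α (c.1, c.2)‖ ^ 2 := by
        intro c
        simp only [hw, norm_mul, Complex.norm_real, mul_pow, Real.norm_eq_abs, sq_abs]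
        rw [Real.sq_sqrt (by positivity), Real.sq_sqrt (by positivity)]
      simp_rw [e]
      have hinj : Function.Injective (fun c : Fin d × Fin d => ((c.1 : ℕ), (c.2 : ℕ))) := by
        rintro ⟨a, b⟩ ⟨c, e⟩ h
        simp only [Prod.mk.injEq] at h
        exact Prod.ext (Fin.ext h.1) (Fin.ext h.2)
      refine le_trans ?_ hα4
      rw [← tsum_fintype (L := .unconditional _)]
      exact tsum_comp_le_tsum_of_inj hα (fun p => by positivity) hinj)
  -- limits
  have lA : ∀ p, Tendsto (fun d : ℕ => ∑ c : Fin d × Fin d, w c.1 * w c.2 * α (c.1, c.2) *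
      (((P p).1.1 ^ (c.1.1 + 1) - (P p).1.2 ^ (c.1.1 + 1)) / w c.1 *
        (((P p).1.1 ^ (c.2.1 + 1) - (P p).1.2 ^ (c.2.1 + 1)) / w c.2))) atTop
      (nhds (gkA α (P p).1.1 (P p).1.2)) := by
    intro p
    have hs := (gkA_hasSum hα.good (P p).2.1 (P p).2.2).summable.hasSum
    have ht : Tendsto (fun d : ℕ => Finset.range d ×ˢ Finset.range d) atTop atTop := by
      rw [tendsto_atTop]
      intro S
      obtain ⟨N, hN⟩ : ∃ N, S ⊆ Finset.range N ×ˢ Finset.range N := by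
        refine ⟨S.sup (fun p => p.1 + p.2) + 1, fun p hp => ?_⟩
        have := Finset.le_sup (f := fun p : ℕ × ℕ => p.1 + p.2) hp
        simp only [Finset.mem_product, Finset.mem_range]
        omega
      filter_upwards [eventually_ge_atTop N] with d hd
      exact hN.trans (Finset.product_subset_product (Finset.range_mono hd) (Finset.range_mono hd))
    refine (Tendsto.comp hs ht).congr fun d => ?_
    simp only [Function.comp]
    rw [Finset.sum_product, Fintype.sum_prod_type, Finset.sum_range]
    refine Finset.sum_congr rfl fun i _ => ?_
    rw [Finset.sum_range]
    refine Finset.sum_congr rfl fun j _ => ?_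
    have := hw0 i
    have := hw0 j
    field_simp
  have lL : ∀ p q, Tendsto (fun d : ℕ => ∑ k : Fin d,
      ((P p).1.1 ^ (k.1 + 1) - (P p).1.2 ^ (k.1 + 1)) / w k *
      conj (((P q).1.1 ^ (k.1 + 1) - (P q).1.2 ^ (k.1 + 1)) / w k)) atTop (nhds (L p q)) := by
    intro p q
    refine (hL p q).tendsto_sum_nat.congr fun d => ?_
    rw [Finset.sum_range]
    refine Finset.sum_congr rfl fun k _ => ?_
    rw [map_div₀, hwc, ← hwsq]
    have := hw0 k
    field_simp
  refine le_of_tendsto_of_tendsto' (b := atTop) ?_ ?_ hfin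
  · refine Tendsto.pow (Tendsto.norm ?_) 2
    refine tendsto_finsetSum _ fun p _ => ?_
    refine Tendsto.const_mul _ (Tendsto.sub_const ?_ _)
    exact (Complex.continuous_exp.tendsto _).comp ((lA p).const_mul _)
  · refine (Complex.continuous_re.tendsto _).comp ?_
    refine tendsto_finsetSum _ fun p _ => tendsto_finsetSum _ fun q _ => ?_
    refine Tendsto.const_mul _ (Tendsto.sub_const ?_ _)
    exact (Complex.continuous_exp.tendsto _).comp (lL p q)

open scoped ComplexConjugate

/-! ### The Hilbert space and the functional -/

/-- The Hilbert space of square summable double sequences. -/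
noncomputable abbrev GkH := lp (fun _ : ℕ × ℕ => ℂ) 2

theorem gk_mem_iff {f : ℕ × ℕ → ℂ} :
    Memℓp (E := fun _ : ℕ × ℕ => ℂ) f 2 ↔ Summable fun p => ‖f p‖ ^ 2 := by
  rw [memℓp_gen_iff (by norm_num)]
  norm_num

theorem gk_ker_mem (q : GkD) :
    Memℓp (E := fun _ : ℕ × ℕ => ℂ) (fun p : ℕ × ℕ => q.1.1 ^ p.1 * q.1.2 ^ p.2) 2 := by
  rw [gk_mem_iff]
  have h1 : ∀ z : ℂ, ‖z‖ < 1 → Summable fun i : ℕ => (‖z‖ ^ 2) ^ i := fun z hz =>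
    summable_geometric_of_lt_one (by positivity) (by nlinarith [norm_nonneg z])
  refine ((h1 _ q.2.1).mul_of_nonneg (h1 _ q.2.2) (fun _ => by positivity)
    (fun _ => by positivity)).congr fun p => ?_
  rw [norm_mul, norm_pow, norm_pow]; ring

/-- The kernel vector. -/
noncomputable def gkK (q : GkD) : GkH := ⟨_, gk_ker_mem q⟩

theorem gkK_apply (q : GkD) (p : ℕ × ℕ) : gkK q p = q.1.1 ^ p.1 * q.1.2 ^ p.2 := rfl

theorem gkK_inner (q q' : GkD) : inner ℂ (gkK q') (gkK q)
    = (1 - q.1.1 * conj q'.1.1)⁻¹ * (1 - q.1.2 * conj q'.1.2)⁻¹ := by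
  have h1 := gk_norm_mul_conj q.2.1 q'.2.1
  have h2 := gk_norm_mul_conj q.2.2 q'.2.2
  rw [lp.inner_eq_tsum, ← tsum_geometric_of_norm_lt_one h1, ← tsum_geometric_of_norm_lt_one h2,
    tsum_mul_tsum_of_summable_norm
      (summable_norm_geometric_of_norm_lt_one h1) (summable_norm_geometric_of_norm_lt_one h2)]
  refine tsum_congr fun p => ?_
  rw [gkK_apply, gkK_apply, RCLike.inner_apply]
  simp only [map_mul, map_pow]
  ring

theorem gk_extend {V H : Type*} [AddCommGroup V] [Module ℂ V] [NormedAddCommGroup H]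
    [NormedSpace ℂ H] (Φ : V →ₗ[ℂ] H) (Ψ : V →ₗ[ℂ] ℂ) (h : ∀ v, ‖Ψ v‖ ≤ ‖Φ v‖) :
    ∃ l : H →L[ℂ] ℂ, ∀ v, l (Φ v) = Ψ v := by
  obtain ⟨g, hg⟩ := Φ.rangeRestrict.exists_rightInverse_of_surjective Φ.range_rangeRestrict
  have hg' : ∀ w : LinearMap.range Φ, Φ (g w) = w := fun w => by
    have := LinearMap.congr_fun hg w
    exact congrArg Subtype.val this
  set f : LinearMap.range Φ →L[ℂ] ℂ := (Ψ.comp g).mkContinuous 1 (fun w => by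
    rw [one_mul, LinearMap.comp_apply]
    refine (h _).trans ?_
    rw [hg']; rfl) with hf
  obtain ⟨l, hl, -⟩ := exists_extension_norm_eq (LinearMap.range Φ) f
  refine ⟨l, fun v => ?_⟩
  have h1 := hl ⟨Φ v, LinearMap.mem_range_self _ _⟩
  rw [h1]
  have h2 : Ψ (g ⟨Φ v, LinearMap.mem_range_self _ _⟩ - v) = 0 := by
    rw [← norm_le_zero_iff]
    refine (h _).trans ?_
    rw [map_sub, hg', sub_self, norm_zero]
  rw [map_sub, sub_eq_zero] at h2
  exact h2

/-- `exp(-A/2) - 1 = (y-x) ℓ(k_{xy})` for a bounded functional. -/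
def GkX (α : ℕ × ℕ → ℂ) : Prop :=
  ∃ l : GkH →L[ℂ] ℂ, ∀ q : GkD,
    Complex.exp (-(1/2) * gkA α q.1.1 q.1.2) - 1 = (q.1.2 - q.1.1) * l (gkK q)

theorem gk_small {α : ℕ × ℕ → ℂ} (hα : GkHS α)
    (hα4 : ∑' p : ℕ × ℕ, ((p.1 : ℝ) + 1) * ((p.2 : ℝ) + 1) * ‖α p‖ ^ 2 ≤ 1 / 4) : GkX α := by
  obtain ⟨l, hl⟩ := gk_extend (V := GkD →₀ ℂ) (H := GkH)
    (Finsupp.linearCombination ℂ (fun q : GkD => (q.1.2 - q.1.1) • gkK q))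
    (Finsupp.linearCombination ℂ
      (fun q : GkD => Complex.exp (-(1/2) * gkA α q.1.1 q.1.2) - 1)) (by
    intro v
    apply le_of_sq_le_sq _ (norm_nonneg _)
    have h := gk_inf_ineq (ι := v.support) (fun p => v p) (fun p => p.1) hα hα4
    rw [Finsupp.linearCombination_apply, Finsupp.linearCombination_apply, Finsupp.sum, Finsupp.sum,
      ← Finset.sum_coe_sort, ← Finset.sum_coe_sort v.support (fun a => v a • (a.1.2 - a.1.1) • gkK a)]
    refine (le_of_eq ?_).trans (h.trans (le_of_eq ?_))
    · simp only [smul_eq_mul]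
    · rw [← inner_self_eq_norm_sq (𝕜 := ℂ), sum_inner]
      simp_rw [inner_sum, inner_smul_left, inner_smul_right, gkK_inner]
      rw [Finset.sum_comm]
      change _ = Complex.re _
      congr 1
      refine Finset.sum_congr rfl fun p _ => Finset.sum_congr rfl fun q _ => ?_
      ring)
  refine ⟨l, fun q => ?_⟩
  have := hl (Finsupp.single q 1)
  simpa using this.symm

/-! ### Backward shifts -/

/-- Backward shift along an injective reindexing. -/
noncomputable def gkBack (e : ℕ × ℕ → ℕ × ℕ) (he : Function.Injective e) : GkH →L[ℂ] GkH :=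
  LinearMap.mkContinuous
    { toFun := fun v => ⟨fun p => v (e p), gk_mem_iff.mpr
        ((gk_mem_iff.mp v.2).comp_injective he)⟩
      map_add' := fun v w => by ext p; rfl
      map_smul' := fun c v => by ext p; rfl } 1 (by
    intro v
    rw [one_mul]
    apply le_of_sq_le_sq _ (norm_nonneg _)
    have h2 : ∀ w : GkH, ‖w‖ ^ 2 = ∑' p, ‖w p‖ ^ 2 := by
      intro w
      have := lp.norm_rpow_eq_tsum (p := 2) (by norm_num) w
      norm_num at this
      exact this
    rw [h2, h2]
    exact tsum_comp_le_tsum_of_inj (gk_mem_iff.mp v.2) (fun p => by positivity) he)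

theorem gkBack_apply (e : ℕ × ℕ → ℕ × ℕ) (he : Function.Injective e) (v : GkH) (p : ℕ × ℕ) :
    gkBack e he v p = v (e p) := rfl

theorem gk_exp_eigen {H : Type*} [NormedAddCommGroup H] [NormedSpace ℂ H] [CompleteSpace H]
    (T : H →L[ℂ] H) (τ : ℂ) (v : H) (h : T v = τ • v) :
    (NormedSpace.exp T) v = Complex.exp τ • v := by
  have hpow : ∀ n : ℕ, (T ^ n) v = τ ^ n • v := by
    intro n
    induction n with
    | zero => simp
    | succ n ih => rw [pow_succ, mul_apply_eq_comp, h, map_smul, ih, smul_smul, pow_succ,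
        mul_comm]
  have h1 := NormedSpace.exp_series_hasSum_exp' (𝕂 := ℂ) T
  have h2 := (ContinuousLinearMap.apply ℂ H v).hasSum h1
  have h3 := (NormedSpace.exp_series_hasSum_exp' (𝕂 := ℂ) τ).smul_const v
  rw [← Complex.exp_eq_exp_ℂ] at h3
  refine h2.unique (h3.congr_fun ?_ |> fun h => h)
  intro n
  simp [hpow, smul_smul]

theorem gkA_add {α β : ℕ × ℕ → ℂ} (hα : GkGood α) (hβ : GkGood β) (q : GkD) :
    gkA (α + β) q.1.1 q.1.2 = gkA α q.1.1 q.1.2 + gkA β q.1.1 q.1.2 := by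
  unfold gkA
  rw [← (gkA_hasSum hα q.2.1 q.2.2).summable.tsum_add (gkA_hasSum hβ q.2.1 q.2.2).summable]
  refine tsum_congr fun p => ?_
  simp only [Pi.add_apply]; ring

theorem gkSuccInj' : Function.Injective (fun p : ℕ × ℕ => (p.1, p.2 + 1)) := by
  rintro ⟨a, b⟩ ⟨c, d⟩ h
  simpa using h

theorem GkX.add_fin {α β : ℕ × ℕ → ℂ} (hα : GkGood α) (hβ : GkGood β) (h1 : GkX α) (h2 : GkX β)
    (S : Finset (ℕ × ℕ)) (hS : ∀ p ∉ S, β p = 0) : GkX (α + β) := by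
  obtain ⟨l1, hl1⟩ := h1
  obtain ⟨l2, hl2⟩ := h2
  set X := gkBack (fun p : ℕ × ℕ => (p.1 + 1, p.2)) gkSuccInj with hX
  set Y := gkBack (fun p : ℕ × ℕ => (p.1, p.2 + 1)) gkSuccInj' with hY
  have hXk : ∀ q, X (gkK q) = q.1.1 • gkK q := by
    intro q; ext p
    have e : (X (gkK q)) p = gkK q (p.1 + 1, p.2) := rfl
    rw [e, gkK_apply, lp.coeFn_smul, Pi.smul_apply, gkK_apply, smul_eq_mul]; ring
  have hYk : ∀ q, Y (gkK q) = q.1.2 • gkK q := by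
    intro q; ext p
    have e : (Y (gkK q)) p = gkK q (p.1, p.2 + 1) := rfl
    rw [e, gkK_apply, lp.coeFn_smul, Pi.smul_apply, gkK_apply, smul_eq_mul]; ring
  have hpow : ∀ (Z : GkH →L[ℂ] GkH) (z : ℂ) (v : GkH), Z v = z • v → ∀ n : ℕ,
      (Z ^ n) v = z ^ n • v := by
    intro Z z v h n
    induction n with
    | zero => simp
    | succ n ih => rw [pow_succ, mul_apply_eq_comp, h, map_smul, ih, smul_smul, pow_succ,
        mul_comm]
  set T : GkH →L[ℂ] GkH := (-(1/2) : ℂ) • ∑ p ∈ S, β p • ((X ^ (p.1 + 1) - Y ^ (p.1 + 1)) *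
    (X ^ (p.2 + 1) - Y ^ (p.2 + 1))) with hT
  have hTk : ∀ q, T (gkK q) = (-(1/2) * gkA β q.1.1 q.1.2) • gkK q := by
    intro q
    have hA : gkA β q.1.1 q.1.2 = ∑ p ∈ S, β p * ((q.1.1 ^ (p.1 + 1) - q.1.2 ^ (p.1 + 1)) *
        (q.1.1 ^ (p.2 + 1) - q.1.2 ^ (p.2 + 1))) :=
      tsum_eq_sum fun p hp => by rw [hS p hp, zero_mul]
    rw [hT, hA, _root_.smul_apply, _root_.sum_apply, mul_smul,
      Finset.sum_smul]
    congr 1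
    refine Finset.sum_congr rfl fun p _ => ?_
    have hd : ∀ n : ℕ, (X ^ n - Y ^ n) (gkK q) = (q.1.1 ^ n - q.1.2 ^ n) • gkK q := by
      intro n
      rw [_root_.sub_apply, hpow X _ _ (hXk q), hpow Y _ _ (hYk q), ← sub_smul]
    rw [_root_.smul_apply, mul_apply_eq_comp, hd, map_smul, hd,
      smul_smul, smul_smul]
    congr 1
    ring
  refine ⟨l2 + l1.comp (NormedSpace.exp T), fun q => ?_⟩
  rw [_root_.add_apply, ContinuousLinearMap.comp_apply, gk_exp_eigen T _ _ (hTk q),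
    map_smul, smul_eq_mul, gkA_add hα hβ, mul_add, mul_add, ← hl2, ← mul_assoc,
    mul_comm (q.1.2 - q.1.1), mul_assoc, ← hl1, Complex.exp_add]
  ring

theorem GkHS.smul {α : ℕ × ℕ → ℂ} (h : GkHS α) (c : ℂ) : GkHS (c • α) := by
  refine (h.mul_left (‖c‖ ^ 2)).congr fun p => ?_
  simp only [Pi.smul_apply, smul_eq_mul, norm_mul]; ring

theorem gk_X {α : ℕ × ℕ → ℂ} (hα : GkHS α) : GkX α := by
  classical
  -- split
  set w : ℕ × ℕ → ℝ := fun p => ((p.1 : ℝ) + 1) * ((p.2 : ℝ) + 1) * ‖α p‖ ^ 2 with hw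
  have hw0 : ∀ p, 0 ≤ w p := fun p => by positivity
  have hws : Summable w := hα
  obtain ⟨S, hS⟩ : ∃ S : Finset (ℕ × ℕ), ∑' p, w p - ∑ p ∈ S, w p < 1 / 4 := by
    have h := hws.hasSum
    have := (h.eventually (lt_mem_nhds (show ∑' p, w p - 1/4 < ∑' p, w p by linarith))).exists
    obtain ⟨S, hS⟩ := this
    exact ⟨S, by linarith⟩
  set tail : ℕ × ℕ → ℂ := fun p => if p ∈ S then 0 else α p with htail
  set head : ℕ × ℕ → ℂ := fun p => if p ∈ S then α p else 0 with hhead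
  have hth : tail + head = α := by
    ext p
    simp only [htail, hhead, Pi.add_apply]
    split_ifs <;> simp
  have hwt : ∀ p, ((p.1 : ℝ) + 1) * ((p.2 : ℝ) + 1) * ‖tail p‖ ^ 2 = if p ∈ S then 0 else w p := by
    intro p; simp only [htail, hw]; split_ifs <;> simp
  have htHS : GkHS tail := by
    unfold GkHS
    simp_rw [hwt]
    refine Summable.of_nonneg_of_le (fun p => ?_) (fun p => ?_) hws
    · split_ifs
      · exact le_rfl
      · exact hw0 p
    · split_ifs
      · exact hw0 p
      · exact le_rfl
  have hheadHS : GkHS head := by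
    refine summable_of_ne_finset_zero (s := S) fun p hp => ?_
    simp [hhead, hp]
  have ht4 : ∑' p : ℕ × ℕ, ((p.1 : ℝ) + 1) * ((p.2 : ℝ) + 1) * ‖tail p‖ ^ 2 ≤ 1 / 4 := by
    have h1 : ∑' p, (w p - (if p ∈ S then w p else 0)) = ∑' p, w p - ∑ p ∈ S, w p := by
      rw [hws.tsum_sub (summable_of_ne_finset_zero (s := S) fun p hp => by simp [hp])]
      congr 1
      rw [tsum_eq_sum (s := S) fun p hp => by simp [hp]]
      exact Finset.sum_congr rfl fun p hp => by simp [hp]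
    simp_rw [hwt]
    rw [← h1] at hS
    refine le_of_eq_of_le ?_ hS.le
    refine tsum_congr fun p => ?_
    split_ifs <;> simp
  have htX : GkX tail := gk_small htHS ht4
  -- scaling of the head
  set B : ℝ := ∑' p : ℕ × ℕ, ((p.1 : ℝ) + 1) * ((p.2 : ℝ) + 1) * ‖head p‖ ^ 2 with hB
  have hB0 : 0 ≤ B := tsum_nonneg fun p => by positivity
  obtain ⟨R, hR⟩ := exists_nat_gt (4 * B + 1)
  have hR1 : (1 : ℝ) < R := by linarith
  have hR0 : (R : ℂ) ≠ 0 := by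
    have : (R : ℝ) ≠ 0 := by linarith
    exact_mod_cast this
  set hs : ℕ × ℕ → ℂ := ((R : ℂ)⁻¹) • head with hhs
  have hsHS : GkHS hs := hheadHS.smul _
  have hsX : GkX hs := by
    refine gk_small hsHS ?_
    have : ∑' p : ℕ × ℕ, ((p.1 : ℝ) + 1) * ((p.2 : ℝ) + 1) * ‖hs p‖ ^ 2 = ((R : ℝ)⁻¹) ^ 2 * B := by
      rw [hB, ← tsum_mul_left]
      refine tsum_congr fun p => ?_
      simp only [hhs, Pi.smul_apply, smul_eq_mul, norm_mul, norm_inv, Complex.norm_natCast]; ring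
    rw [this, inv_pow, inv_mul_le_iff₀ (by positivity)]
    nlinarith
  have hind : ∀ m : ℕ, GkX (tail + (m : ℂ) • hs) := by
    intro m
    induction m with
    | zero => simpa using htX
    | succ m ih =>
      have : tail + ((m + 1 : ℕ) : ℂ) • hs = (tail + (m : ℂ) • hs) + hs := by
        push_cast; rw [add_smul, one_smul, add_assoc]
      rw [this]
      refine GkX.add_fin (htHS.good.add (hsHS.good.smul _)) hsHS.good ih hsX S fun p hp => ?_
      simp [hhs, hhead, hp]
  have := hind R
  rwa [hhs, smul_smul, mul_inv_cancel₀ hR0, one_smul, hth] at this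

/-- Existence of the coefficient array in `ℓ²`. -/
theorem gk_X_coeff {α : ℕ × ℕ → ℂ} (hα : GkHS α) :
    ∃ n : ℕ × ℕ → ℂ, (Summable fun p => ‖n p‖ ^ 2) ∧ ∀ x y : ℂ, ‖x‖ < 1 → ‖y‖ < 1 →
      Complex.exp (-(1/2) * gkA α x y) = 1 + (y - x) * gkEv n x y := by
  obtain ⟨l, hl⟩ := gk_X hα
  set w : GkH := (InnerProductSpace.toDual ℂ GkH).symm l with hw
  refine ⟨fun p => conj (w p), ?_, fun x y hx hy => ?_⟩
  · simpa using gk_mem_iff.mp w.2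
  · have h := hl ⟨(x, y), hx, hy⟩
    rw [← InnerProductSpace.toDual_symm_apply (𝕜 := ℂ) (E := GkH), lp.inner_eq_tsum] at h
    have : gkEv (fun p => conj (w p)) x y
        = ∑' p, inner ℂ (w p) (gkK ⟨(x, y), hx, hy⟩ p) := by
      refine tsum_congr fun p => ?_
      rw [gkK_apply, RCLike.inner_apply]; ring
    rw [this]
    linear_combination h

open scoped ComplexConjugate

/-! ### Existence of the coefficient array for general Grunsky coefficients -/

/-- Rescaling. -/
noncomputable def gkScale (ρ : ℝ) (t : ℕ × ℕ → ℂ) : ℕ × ℕ → ℂ :=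
  fun p => t p * (ρ : ℂ) ^ (p.1 + p.2)

theorem gkEv_scale (ρ : ℝ) (t : ℕ × ℕ → ℂ) (x y : ℂ) :
    gkEv (gkScale ρ t) x y = gkEv t (ρ * x) (ρ * y) := by
  refine tsum_congr fun p => ?_
  simp only [gkScale, mul_pow, pow_add]; ring

theorem GkGood.mono_scale {t : ℕ × ℕ → ℂ} {ρ σ : ℝ} (h0 : 0 ≤ ρ) (h1 : ρ ≤ σ)
    (h : GkGood (gkScale σ t)) : GkGood (gkScale ρ t) := by
  intro r hr hr1
  refine Summable.of_nonneg_of_le (fun p => by positivity) (fun p => ?_) (h r hr hr1)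
  simp only [gkScale, norm_mul, norm_pow, Complex.norm_real, Real.norm_eq_abs, abs_of_nonneg h0,
    abs_of_nonneg (h0.trans h1)]
  gcongr

theorem GkGood.scale {t : ℕ × ℕ → ℂ} {ρ : ℝ} (h0 : 0 ≤ ρ) (h1 : ρ ≤ 1)
    (h : GkGood t) : GkGood (gkScale ρ t) := by
  refine GkGood.mono_scale h0 h1 ?_
  have : gkScale 1 t = t := by ext p; simp [gkScale]
  rwa [this]

theorem GkGood.hs_scale {α : ℕ × ℕ → ℂ} (h : GkGood α) {ρ : ℝ} (h0 : 0 < ρ) (h1 : ρ < 1) :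
    GkHS (fun p => α p * (ρ : ℂ) ^ (p.1 + 1) * (ρ : ℂ) ^ (p.2 + 1)) := by
  obtain ⟨σ, h2, h3⟩ := exists_between h1
  have hσ : 0 < σ := h0.trans h2
  obtain ⟨C, hC⟩ := gk_mul_pow_bound h0.le h2
  obtain ⟨D, hD⟩ := (h ρ h0.le h1).tendsto_cofinite_zero.bddAbove_range_of_cofinite
  have hD' : ∀ p : ℕ × ℕ, ‖α p‖ * ρ ^ (p.1 + p.2) ≤ D := fun p => hD ⟨p, rfl⟩
  have hC0 : 0 ≤ C := by
    have := hC 0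
    simp at this
    by_contra hc
    push Not at hc
    nlinarith
  have hD0 : 0 ≤ D := le_trans (by positivity) (hD' 0)
  refine Summable.of_nonneg_of_le (fun p => by positivity) (fun p => ?_)
    ((h σ hσ.le h3).mul_left (C ^ 2 * D))
  simp only [norm_mul, norm_pow, Complex.norm_real, Real.norm_eq_abs, abs_of_pos h0]
  have e1 := hC p.1
  have e2 := hC p.2
  have e3 := hD' p
  calc ((p.1 : ℝ) + 1) * ((p.2 : ℝ) + 1) * (‖α p‖ * ρ ^ (p.1 + 1) * ρ ^ (p.2 + 1)) ^ 2
      = (((p.1 : ℝ) + 1) * ρ ^ p.1) * (((p.2 : ℝ) + 1) * ρ ^ p.2) *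
        (‖α p‖ * ρ ^ (p.1 + p.2)) * ‖α p‖ * ρ ^ 4 := by ring
    _ ≤ (C * σ ^ (p.1 + 1)) * (C * σ ^ (p.2 + 1)) * D * ‖α p‖ * 1 := by
        have : ρ ^ 4 ≤ 1 := pow_le_one₀ h0.le h1.le
        gcongr
    _ = C ^ 2 * D * (‖α p‖ * σ ^ (p.1 + p.2)) * σ ^ 2 := by ring
    _ ≤ C ^ 2 * D * (‖α p‖ * σ ^ (p.1 + p.2)) * 1 := by
        have : σ ^ 2 ≤ 1 := pow_le_one₀ hσ.le h3.le
        gcongr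
    _ = _ := by ring

/-- The defining identity of the array `m`, on the bidisk of radius `ρ`. -/
def GkM (α m : ℕ × ℕ → ℂ) (ρ : ℝ) : Prop :=
  GkGood (gkScale ρ m) ∧ ∀ x y : ℂ, ‖x‖ < ρ → ‖y‖ < ρ →
    Complex.exp (-(1/2) * gkA α x y) = 1 + (y - x) * gkEv m x y

theorem GkM.exists {α : ℕ × ℕ → ℂ} (h : GkGood α) {ρ : ℝ} (h0 : 0 < ρ) (h1 : ρ < 1) :
    ∃ m, GkM α m ρ := by
  obtain ⟨n, hn, hn2⟩ := gk_X_coeff (h.hs_scale h0 h1)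
  have hρ : (ρ : ℂ) ≠ 0 := by exact_mod_cast h0.ne'
  refine ⟨fun p => n p * ((ρ : ℂ) ^ (p.1 + p.2 + 1))⁻¹, ?_, ?_⟩
  · have : gkScale ρ (fun p => n p * ((ρ : ℂ) ^ (p.1 + p.2 + 1))⁻¹) = (ρ : ℂ)⁻¹ • n := by
      ext p
      simp only [gkScale, Pi.smul_apply, smul_eq_mul]
      field_simp
      ring
    rw [this]
    exact (GkGood.of_sq hn).smul _
  · intro x y hx hy
    have hsc : ∀ z : ℂ, ‖z‖ < ρ → ‖z / ρ‖ < 1 := by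
      intro z hz
      rw [norm_div, Complex.norm_real, Real.norm_eq_abs, abs_of_pos h0, div_lt_one h0]; exact hz
    have h3 := hn2 (x / ρ) (y / ρ) (hsc x hx) (hsc y hy)
    have h4 : gkA (fun p => α p * (ρ : ℂ) ^ (p.1 + 1) * (ρ : ℂ) ^ (p.2 + 1)) (x / ρ) (y / ρ)
        = gkA α x y := by
      refine tsum_congr fun p => ?_
      simp only [div_pow]
      field_simp
    have h5 : gkEv n (x / ρ) (y / ρ)
        = ρ * gkEv (fun p => n p * ((ρ : ℂ) ^ (p.1 + p.2 + 1))⁻¹) x y := by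
      unfold gkEv
      rw [← tsum_mul_left]
      refine tsum_congr fun p => ?_
      simp only [div_pow]
      field_simp
      ring
    rw [h4, h5] at h3
    rw [h3]
    field_simp

theorem GkM.unique {α m m' : ℕ × ℕ → ℂ} {ρ : ℝ} (h0 : 0 < ρ) (h : GkM α m ρ) (h' : GkM α m' ρ) :
    m = m' := by
  have hz : gkScale ρ m + (-1 : ℂ) • gkScale ρ m' = 0 := by
    refine gk_unique_two (h.1.add (h'.1.smul _)) one_pos le_rfl ?_
    intro x y hx hy hxy hx1 hy1
    rw [gkEv_add h.1 (h'.1.smul _) hx1 hy1, gkEv_smul, gkEv_scale, gkEv_scale]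
    have hsc : ∀ z : ℂ, ‖z‖ < 1 → ‖(ρ : ℂ) * z‖ < ρ := by
      intro z hz
      rw [norm_mul, Complex.norm_real, Real.norm_eq_abs, abs_of_pos h0]
      nlinarith [norm_nonneg z]
    have e1 := h.2 _ _ (hsc x hx1) (hsc y hy1)
    have e2 := h'.2 _ _ (hsc x hx1) (hsc y hy1)
    have hρ : (ρ : ℂ) ≠ 0 := by exact_mod_cast h0.ne'
    have hne : (ρ : ℂ) * (y - x) ≠ 0 := mul_ne_zero hρ (sub_ne_zero.mpr hxy.symm)
    apply mul_left_cancel₀ hne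
    linear_combination e2 - e1
  ext p
  have h1 := congrFun hz p
  have hρ : (ρ : ℂ) ^ (p.1 + p.2) ≠ 0 := pow_ne_zero _ (by exact_mod_cast h0.ne')
  simp only [gkScale, Pi.add_apply, Pi.smul_apply, smul_eq_mul, Pi.zero_apply] at h1
  apply mul_right_cancel₀ hρ
  linear_combination h1

theorem GkM.mono {α m : ℕ × ℕ → ℂ} {ρ σ : ℝ} (h0 : 0 ≤ ρ) (h1 : ρ ≤ σ) (h : GkM α m σ) :
    GkM α m ρ :=
  ⟨h.1.mono_scale h0 h1, fun x y hx hy => h.2 x y (hx.trans_le h1) (hy.trans_le h1)⟩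

theorem gk_m_exists {α : ℕ × ℕ → ℂ} (h : GkGood α) :
    ∃ m : ℕ × ℕ → ℂ, GkGood m ∧
      (∀ x y : ℂ, ‖x‖ < 1 → ‖y‖ < 1 →
        Complex.exp (-(1/2) * gkA α x y) = 1 + (y - x) * gkEv m x y) ∧
      (GkHS α → Summable fun p => ‖m p‖ ^ 2) := by
  have h2 : (0 : ℝ) < 1 / 2 := by norm_num
  obtain ⟨m, hm⟩ := GkM.exists h h2 (by norm_num)
  have key : ∀ ρ : ℝ, 1 / 2 ≤ ρ → ρ < 1 → GkM α m ρ := by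
    intro ρ hρ hρ1
    obtain ⟨m', hm'⟩ := GkM.exists h (h2.trans_le hρ) hρ1
    rw [GkM.unique h2 hm (hm'.mono h2.le hρ)]
    exact hm'
  refine ⟨m, ?_, ?_, ?_⟩
  · intro r hr hr1
    obtain ⟨ρ, hρ, hρ1⟩ := exists_between (max_lt hr1 (show (1/2 : ℝ) < 1 by norm_num))
    have hr2 := (le_max_left _ _).trans_lt hρ
    have hρ2 := ((le_max_right _ _).trans_lt hρ).le
    have hρ0 := h2.trans_le hρ2
    have hk := (key ρ hρ2 hρ1).1 (r / ρ) (by positivity) ((div_lt_one hρ0).mpr hr2)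
    refine hk.congr fun p => ?_
    simp only [gkScale, norm_mul, norm_pow, Complex.norm_real, Real.norm_eq_abs, abs_of_pos hρ0]
    rw [div_pow]
    field_simp
  · intro x y hx hy
    obtain ⟨ρ, hρ, hρ1⟩ := exists_between (max_lt (max_lt hx hy) (show (1/2 : ℝ) < 1 by norm_num))
    refine (key ρ ((le_max_right _ _).trans_lt hρ).le hρ1).2 x y ?_ ?_
    · exact ((le_max_left _ _).trans (le_max_left _ _)).trans_lt hρ
    · exact ((le_max_right _ _).trans (le_max_left _ _)).trans_lt hρ
  · intro hs
    obtain ⟨n, hn, hn2⟩ := gk_X_coeff hs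
    have : GkM α n (1 / 2) := ⟨(GkGood.of_sq hn).scale h2.le (by norm_num), fun x y hx hy =>
      hn2 x y (by linarith) (by linarith)⟩
    rw [GkM.unique h2 hm this]
    exact hn

open scoped ComplexConjugate

/-! ### The functional identity -/

/-- Coefficients of `F(x,y) = xy ∑ α x^i y^j`. -/
def gkT (α : ℕ × ℕ → ℂ) : ℕ × ℕ → ℂ := gkShX (gkShY α)

theorem gkT_good {α : ℕ × ℕ → ℂ} (h : GkGood α) : GkGood (gkT α) := h.shY.shX

theorem gkT_ev (α : ℕ × ℕ → ℂ) (x y : ℂ) : gkEv (gkT α) x y = x * y * gkEv α x y := by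
  rw [gkT, gkEv_shX, gkEv_shY]; ring

theorem gkEv_symm {α : ℕ × ℕ → ℂ} (hs : ∀ i j, α (i, j) = α (j, i)) (x y : ℂ) :
    gkEv α x y = gkEv α y x := by
  rw [← gkEv_swap]
  congr 1
  ext ⟨i, j⟩
  exact (hs i j).symm

theorem gkA_eq_F {α : ℕ × ℕ → ℂ} (h : GkGood α) (hs : ∀ i j, α (i, j) = α (j, i)) {x y : ℂ}
    (hx : ‖x‖ < 1) (hy : ‖y‖ < 1) :
    gkA α x y = gkEv (gkT α) x x + gkEv (gkT α) y y - 2 * gkEv (gkT α) x y := by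
  rw [gkA_eq h hx hy, gkT_ev, gkT_ev, gkT_ev, gkEv_symm hs y x]; ring

/-- The Grunsky relation in the variables `x = 1/ζ`, `y = 1/z`. -/
def GkRel (α : ℕ × ℕ → ℂ) (Φ : ℂ → ℂ) : Prop :=
  ∀ x y : ℂ, x ≠ 0 → y ≠ 0 → ‖x‖ < 1 → ‖y‖ < 1 →
    Φ x - Φ y = (x⁻¹ - y⁻¹) * Complex.exp (-gkEv (gkT α) x y)

theorem gk_deriv_rel {α : ℕ × ℕ → ℂ} (h : GkGood α) {Φ : ℂ → ℂ} (hr : GkRel α Φ) {x y : ℂ}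
    (hx0 : x ≠ 0) (hy0 : y ≠ 0) (hx : ‖x‖ < 1) (hy : ‖y‖ < 1) :
    HasDerivAt Φ (-(x ^ 2)⁻¹ * Complex.exp (-gkEv (gkT α) x y) +
      (x⁻¹ - y⁻¹) * (Complex.exp (-gkEv (gkT α) x y) * (-gkEv (gkDx (gkT α)) x y))) x := by
  have h1 := (gkT_good h).hasDerivAt_x hx hy
  have h2 := ((hasDerivAt_inv hx0).sub_const y⁻¹).mul h1.neg.cexp
  have h3 := h2.add_const (Φ y)
  refine h3.congr_of_eventuallyEq ?_
  have e1 : ∀ᶠ w in nhds x, w ≠ 0 := isOpen_ne.mem_nhds hx0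
  have e2 : ∀ᶠ w in nhds x, ‖w‖ < 1 := (isOpen_lt continuous_norm continuous_const).mem_nhds hx
  filter_upwards [e1, e2] with w hw0 hw1
  have := hr w y hw0 hy0 hw1 hy
  simp only [Pi.mul_apply]
  linear_combination this

theorem gk_rel1 {α : ℕ × ℕ → ℂ} (h : GkGood α) {Φ : ℂ → ℂ} (hr : GkRel α Φ) {x y : ℂ}
    (hx0 : x ≠ 0) (hy0 : y ≠ 0) (hx : ‖x‖ < 1) (hy : ‖y‖ < 1) :
    Complex.exp (-gkEv (gkT α) x x) = Complex.exp (-gkEv (gkT α) x y) *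
      (1 + (x - x ^ 2 * y⁻¹) * gkEv (gkDx (gkT α)) x y) := by
  have h1 := (gk_deriv_rel h hr hx0 hx0 hx hx).unique (gk_deriv_rel h hr hx0 hy0 hx hy)
  rw [sub_self, zero_mul, add_zero] at h1
  have : x ^ 2 * (x ^ 2)⁻¹ = 1 := mul_inv_cancel₀ (pow_ne_zero 2 hx0)
  have h3 : x * x⁻¹ = 1 := mul_inv_cancel₀ hx0
  linear_combination (-x ^ 2) * h1 + (Complex.exp (-gkEv (gkT α) x y)
    - Complex.exp (-gkEv (gkT α) x x)) * this
    + (Complex.exp (-gkEv (gkT α) x y) * gkEv (gkDx (gkT α)) x y) * x * h3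

theorem gk_rel2 {α : ℕ × ℕ → ℂ} (h : GkGood α) {Φ : ℂ → ℂ} (hr : GkRel α Φ) {x y : ℂ}
    (hx0 : x ≠ 0) (hy0 : y ≠ 0) (hx : ‖x‖ < 1) (hy : ‖y‖ < 1) :
    -gkEv (gkDy (gkT α)) x y * (1 + (x - x ^ 2 * y⁻¹) * gkEv (gkDx (gkT α)) x y)
      + x ^ 2 * (y ^ 2)⁻¹ * gkEv (gkDx (gkT α)) x y
      + (x - x ^ 2 * y⁻¹) * gkEv (gkDy (gkDx (gkT α))) x y = 0 := by
  have h1 := ((gkT_good h).hasDerivAt_y hx hy).neg.cexp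
  have h2 := (gkT_good h).dx.hasDerivAt_y hx hy
  have h3 := ((((hasDerivAt_inv hy0).const_mul (x ^ 2)).const_sub x).mul h2).const_add 1
  have h4 := h1.mul h3
  have h5 : HasDerivAt (fun _ : ℂ => Complex.exp (-gkEv (gkT α) x x)) 0 y := hasDerivAt_const _ _
  have h6 := h5.congr_of_eventuallyEq (f₁ := fun w => Complex.exp (-gkEv (gkT α) x w) *
      (1 + (x - x ^ 2 * w⁻¹) * gkEv (gkDx (gkT α)) x w)) (by
    have e1 : ∀ᶠ w in nhds y, w ≠ 0 := isOpen_ne.mem_nhds hy0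
    have e2 : ∀ᶠ w in nhds y, ‖w‖ < 1 := (isOpen_lt continuous_norm continuous_const).mem_nhds hy
    filter_upwards [e1, e2] with w hw0 hw1
    exact (gk_rel1 h hr hx0 hw0 hx hw1).symm)
  have h7 := h6.unique h4
  apply mul_left_cancel₀ (Complex.exp_ne_zero (-gkEv (gkT α) x y))
  simp only [Pi.mul_apply, Pi.neg_apply] at h7
  linear_combination -h7

theorem gk_E_sq {α : ℕ × ℕ → ℂ} (h : GkGood α) (hs : ∀ i j, α (i, j) = α (j, i)) {Φ : ℂ → ℂ}
    (hr : GkRel α Φ) {x y : ℂ}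
    (hx0 : x ≠ 0) (hy0 : y ≠ 0) (hx : ‖x‖ < 1) (hy : ‖y‖ < 1) :
    Complex.exp (-(1/2) * gkA α x y) ^ 2
      = 1 - (y - x) ^ 2 * gkEv (gkDy (gkDx (gkT α))) x y := by
  have hsT : ∀ i j, gkT α (i, j) = gkT α (j, i) := by
    intro i j
    simp only [gkT, gkShX, gkShY]
    split_ifs <;> first | rfl | exact hs _ _
  have e1 := gk_rel1 h hr hx0 hy0 hx hy
  have e2 := gk_rel1 h hr hy0 hx0 hy hx
  have e3 := gk_rel2 h hr hx0 hy0 hx hy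
  have e4 : gkEv (gkDx (gkT α)) y x = gkEv (gkDy (gkT α)) x y := by
    rw [gkDy_eq, gkEv_swap]
    congr 2
    ext ⟨i, j⟩; exact hsT i j
  rw [e4, gkEv_symm hsT y x] at e2
  have e5 : Complex.exp (-(1/2) * gkA α x y) ^ 2 = Complex.exp (-gkEv (gkT α) x x)
      * Complex.exp (-gkEv (gkT α) y y) * Complex.exp (gkEv (gkT α) x y) ^ 2 := by
    rw [gkA_eq_F h hs hx hy, ← Complex.exp_nat_mul, ← Complex.exp_nat_mul, ← Complex.exp_add,
      ← Complex.exp_add]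
    congr 1
    push_cast; ring
  rw [e5, e1, e2, Complex.exp_neg]
  have hne := Complex.exp_ne_zero (gkEv (gkT α) x y)
  generalize gkEv (gkDx (gkT α)) x y = P at *
  generalize gkEv (gkDy (gkT α)) x y = R at *
  generalize gkEv (gkDy (gkDx (gkT α))) x y = G at *
  generalize Complex.exp (gkEv (gkT α) x y) = e at *
  have e6 : e⁻¹ * (1 + (x - x ^ 2 * y⁻¹) * P) * (e⁻¹ * (1 + (y - y ^ 2 * x⁻¹) * R)) * e ^ 2
    = (1 + (x - x ^ 2 * y⁻¹) * P) * (1 + (y - y ^ 2 * x⁻¹) * R) := by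
    field_simp
  rw [e6]
  field_simp at e3 ⊢
  linear_combination (y - x) * e3

/-- The linear relation between arrays. -/
theorem gk_array_rel {α : ℕ × ℕ → ℂ} (h : GkGood α) (hs : ∀ i j, α (i, j) = α (j, i)) {Φ : ℂ → ℂ}
    (hr : GkRel α Φ) {m : ℕ × ℕ → ℂ} (hm : GkGood m)
    (hm2 : ∀ x y : ℂ, ‖x‖ < 1 → ‖y‖ < 1 →
        Complex.exp (-(1/2) * gkA α x y) = 1 + (y - x) * gkEv m x y) :
    let B := gkDy (gkDx (gkT α)) + gkConv m m
    ∀ p, gkShX B p - gkShY B p = 2 * m p := by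
  intro B
  have hB : GkGood B := (gkT_good h).dx.dy.add (hm.conv hm)
  have hz : gkShX B + (-1 : ℂ) • gkShY B + (-2 : ℂ) • m = 0 := by
    refine gk_unique_two ((hB.shX.add (hB.shY.smul _)).add (hm.smul _)) one_pos le_rfl ?_
    intro x y hx0 hy0 hxy hx hy
    rw [gkEv_add (hB.shX.add (hB.shY.smul _)) (hm.smul _) hx hy,
      gkEv_add hB.shX (hB.shY.smul _) hx hy, gkEv_smul, gkEv_smul, gkEv_shX, gkEv_shY,
      gkEv_add (gkT_good h).dx.dy (hm.conv hm) hx hy, gkEv_conv hm hm hx hy]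
    have e := gk_E_sq h hs hr hx0 hy0 hx hy
    rw [hm2 x y hx hy] at e
    apply mul_left_cancel₀ (sub_ne_zero.mpr hxy)
    linear_combination e
  intro p
  have := congrFun hz p
  simp only [Pi.add_apply, Pi.smul_apply, smul_eq_mul, Pi.zero_apply] at this
  linear_combination this

/-! ### Summation over antidiagonals and the Poincare inequality -/

theorem gk_diag {f : ℕ × ℕ → ℝ} (hf : ∀ p, 0 ≤ f p) :
    Summable f ↔ Summable fun s => ∑ p ∈ Finset.HasAntidiagonal.antidiagonal s, f p := by
  rw [← Finset.HasAntidiagonal.sigmaAntidiagonalEquivProd.summable_iff]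
  have key := summable_sigma_of_nonneg
    (f := f ∘ ⇑(Finset.HasAntidiagonal.sigmaAntidiagonalEquivProd (A := ℕ))) (fun _ => hf _)
  rw [key]
  constructor
  · rintro ⟨-, h⟩
    refine h.congr fun s => ?_
    exact Finset.tsum_subtype (Finset.HasAntidiagonal.antidiagonal s) f
  · intro h
    refine ⟨fun s => (hasSum_fintype _).summable, h.congr fun s => ?_⟩
    exact (Finset.tsum_subtype (Finset.HasAntidiagonal.antidiagonal s) f).symm

theorem gk_step {z w : ℂ} {u v : ℝ} (hu : 0 ≤ u) (hv : 0 ≤ v) (hz : u = 0 → z = 0)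
    (hw : v = 0 → w = 0) :
    ‖w‖ ^ 2 * (1 - u / v) + ‖z‖ ^ 2 * (1 - v / u) ≤ ‖w - z‖ ^ 2 := by
  have h1 : (‖w‖ - ‖z‖) ^ 2 ≤ ‖w - z‖ ^ 2 := by
    have := abs_norm_sub_norm_le w z
    rw [← sq_abs]; gcongr
  refine le_trans ?_ h1
  rcases hu.eq_or_lt with h | h
  · rw [hz h.symm, ← h]; simp
  rcases hv.eq_or_lt with h' | h'
  · rw [hw h'.symm, ← h']; simp
  have : 2 * (‖w‖ * ‖z‖) ≤ ‖w‖ ^ 2 * (u / v) + ‖z‖ ^ 2 * (v / u) := by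
    have e : ‖w‖ ^ 2 * (u / v) + ‖z‖ ^ 2 * (v / u) - 2 * (‖w‖ * ‖z‖)
      = (‖w‖ * u - ‖z‖ * v) ^ 2 / (u * v) := by field_simp; ring
    have : 0 ≤ (‖w‖ * u - ‖z‖ * v) ^ 2 / (u * v) := by positivity
    linarith
  nlinarith

theorem gk_poincare (S : ℕ) (b : ℕ → ℂ) (h0 : b 0 = 0) (h1 : b (S + 1) = 0) :
    ∑ i ∈ Finset.range S, 2 * ‖b (i + 1)‖ ^ 2 / (((i : ℝ) + 1) * ((S : ℝ) - i))
      ≤ ∑ i ∈ Finset.range (S + 1), ‖b (i + 1) - b i‖ ^ 2 := by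
  set u : ℕ → ℝ := fun i => (i : ℝ) * ((S : ℝ) + 1 - i) with hu
  have hstep : ∀ i ∈ Finset.range (S + 1),
      ‖b (i + 1)‖ ^ 2 * (1 - u i / u (i + 1)) + ‖b i‖ ^ 2 * (1 - u (i + 1) / u i)
        ≤ ‖b (i + 1) - b i‖ ^ 2 := by
    intro i hi
    have hiS : i ≤ S := by simpa [Nat.lt_succ_iff] using hi
    have hiS' : (i : ℝ) ≤ S := by exact_mod_cast hiS
    refine gk_step ?_ ?_ ?_ ?_
    · exact mul_nonneg (by positivity) (by linarith)
    · simp only [hu]; push_cast; exact mul_nonneg (by positivity) (by linarith)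
    · intro h
      rcases mul_eq_zero.mp h with h | h
      · have : i = 0 := by exact_mod_cast h
        rw [this, h0]
      · linarith
    · intro h
      rcases mul_eq_zero.mp h with h | h
      · have : i + 1 = 0 := by exact_mod_cast h
        omega
      · have : i = S := by
          have : (i : ℝ) = S := by push_cast at h; linarith
          exact_mod_cast this
        rw [this, h1]
  refine le_trans (le_of_eq ?_) (Finset.sum_le_sum hstep)
  rw [Finset.sum_add_distrib, Finset.sum_range_succ, Finset.sum_range_succ' _ S, h1, h0]
  simp only [norm_zero, ne_eq, OfNat.ofNat_ne_zero, not_false_eq_true, zero_pow, zero_mul, add_zero]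
  rw [← Finset.sum_add_distrib]
  refine Finset.sum_congr rfl fun i hi => ?_
  have hi' : (i : ℝ) + 1 ≤ S := by exact_mod_cast Finset.mem_range.mp hi
  have hpos : (0 : ℝ) < (S : ℝ) - i := by linarith
  have hi0 : (0 : ℝ) < (i : ℝ) + 1 := by positivity
  have e : u (i + 1) = ((i : ℝ) + 1) * ((S : ℝ) - i) := by simp only [hu]; push_cast; ring
  have e0 : u (i + 1) ≠ 0 := by rw [e]; positivity
  have e2 : u i + u (i + 1 + 1) = 2 * u (i + 1) - 2 := by simp only [hu]; push_cast; ring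
  rw [← e]
  clear_value u
  field_simp
  linear_combination (‖b (i + 1)‖ ^ 2) * e2

theorem gk_B_summable {B m : ℕ × ℕ → ℂ} (hB : ∀ p, gkShX B p - gkShY B p = 2 * m p)
    (hm : Summable fun p => ‖m p‖ ^ 2) :
    Summable fun p : ℕ × ℕ => ‖B p‖ ^ 2 / (((p.1 : ℝ) + 1) * ((p.2 : ℝ) + 1)) := by
  rw [gk_diag (fun p => by positivity)]
  have h1 := (gk_diag (f := fun p => ‖m p‖ ^ 2) (fun p => by positivity)).mp hm
  have h2 := ((summable_nat_add_iff 1).mpr h1).mul_left 2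
  refine Summable.of_nonneg_of_le (fun s => Finset.sum_nonneg fun p _ => by positivity)
    (fun s => ?_) h2
  rw [Finset.Nat.sum_antidiagonal_eq_sum_range_succ_mk,
    Finset.Nat.sum_antidiagonal_eq_sum_range_succ_mk]
  have key := gk_poincare (s + 1)
    (fun i => if i = 0 ∨ i = s + 2 then 0 else B (i - 1, s + 1 - i)) (by simp) (by simp)
  have e1 : ∑ i ∈ Finset.range (s + 1 + 1), ‖(if i + 1 = 0 ∨ i + 1 = s + 2 then 0 else
      B (i + 1 - 1, s + 1 - (i + 1))) - (if i = 0 ∨ i = s + 2 then 0 else B (i - 1, s + 1 - i))‖ ^ 2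
      = 4 * ∑ i ∈ Finset.range (s + 1 + 1), ‖m (i, s + 1 - i)‖ ^ 2 := by
    rw [Finset.mul_sum]
    refine Finset.sum_congr rfl fun i hi => ?_
    have hi' : i < s + 2 := Finset.mem_range.mp hi
    have e2 := hB (i, s + 1 - i)
    have e3 : (4 : ℝ) * ‖m (i, s + 1 - i)‖ ^ 2 = ‖2 * m (i, s + 1 - i)‖ ^ 2 := by
      rw [norm_mul]; norm_num; ring
    rw [e3, ← e2, norm_sub_rev]
    congr 2
    simp only [gkShX, gkShY]
    congr 1
    · by_cases h : i = 0
      · simp [h]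
      · simp [h, hi'.ne]
    · by_cases h : i = s + 1
      · simp [h]
      · have h3 : s + 1 - i ≠ 0 := by omega
        have h4 : i + 1 ≠ s + 2 := by omega
        have h5 : s + 1 - (i + 1) = s + 1 - i - 1 := by omega
        simp [h, h3, h5]
  rw [e1] at key
  have e4 : ∑ i ∈ Finset.range (s + 1), 2 * ‖(if i + 1 = 0 ∨ i + 1 = s + 2 then 0 else
      B (i + 1 - 1, s + 1 - (i + 1)))‖ ^ 2 / (((i : ℝ) + 1) * (((s + 1 : ℕ) : ℝ) - i))
      = 2 * ∑ i ∈ Finset.range (s + 1), ‖B (i, s - i)‖ ^ 2 /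
        (((i : ℝ) + 1) * (((s - i : ℕ) : ℝ) + 1)) := by
    rw [Finset.mul_sum]
    refine Finset.sum_congr rfl fun i hi => ?_
    have hi' : i < s + 1 := Finset.mem_range.mp hi
    have h4 : ¬ (i + 1 = 0 ∨ i + 1 = s + 2) := by omega
    have h5 : s + 1 - (i + 1) = s - i := by omega
    rw [if_neg h4, h5, Nat.cast_sub (by omega), Nat.add_sub_cancel]
    push_cast
    rw [mul_div_assoc]
    congr 3
    ring
  rw [e4] at key
  simp only [Nat.succ_eq_add_one]
  linarith

theorem gk_conv_summable {m : ℕ × ℕ → ℂ} (hm : Summable fun p => ‖m p‖ ^ 2) :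
    Summable fun p : ℕ × ℕ => ‖gkConv m m p‖ ^ 2 / (((p.1 : ℝ) + 1) * ((p.2 : ℝ) + 1)) := by
  refine Summable.of_nonneg_of_le (fun p => by positivity) (fun p => ?_)
    (gk_cauchy_summable hm hm (fun p => by positivity) (fun p => by positivity))
  rw [div_le_iff₀ (by positivity), gkConv]
  calc ‖∑ q ∈ Finset.HasAntidiagonal.antidiagonal p, m q.1 * m q.2‖ ^ 2
      ≤ (∑ q ∈ Finset.HasAntidiagonal.antidiagonal p, ‖m q.1 * m q.2‖) ^ 2 := by
        gcongr; exact norm_sum_le _ _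
    _ ≤ (Finset.HasAntidiagonal.antidiagonal p).card *
        ∑ q ∈ Finset.HasAntidiagonal.antidiagonal p, ‖m q.1 * m q.2‖ ^ 2 :=
        sq_sum_le_card_mul_sum_sq
    _ ≤ (((p.1 : ℝ) + 1) * ((p.2 : ℝ) + 1)) *
        ∑ q ∈ Finset.HasAntidiagonal.antidiagonal p, ‖m q.1 * m q.2‖ ^ 2 := by
        gcongr
        exact_mod_cast gk_card_antidiag p
    _ = _ := by
        rw [mul_comm]
        simp_rw [norm_mul, mul_pow]

theorem gk_m_imp_HS {α : ℕ × ℕ → ℂ} (h : GkGood α) (hs : ∀ i j, α (i, j) = α (j, i)) {Φ : ℂ → ℂ}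
    (hr : GkRel α Φ) {m : ℕ × ℕ → ℂ} (hm : GkGood m)
    (hm2 : ∀ x y : ℂ, ‖x‖ < 1 → ‖y‖ < 1 →
        Complex.exp (-(1/2) * gkA α x y) = 1 + (y - x) * gkEv m x y)
    (hms : Summable fun p => ‖m p‖ ^ 2) : GkHS α := by
  have h1 := gk_B_summable (gk_array_rel h hs hr hm hm2) hms
  have h2 := gk_conv_summable hms
  refine Summable.of_nonneg_of_le (fun p => by positivity) (fun p => ?_)
    ((h1.mul_left 2).add (h2.mul_left 2))
  have hg : gkDy (gkDx (gkT α)) p = ((p.1 : ℂ) + 1) * ((p.2 : ℂ) + 1) * α p := by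
    simp [gkDy, gkDx, gkT, gkShX, gkShY]; ring
  have e : ∀ k : ℕ, ‖((k : ℂ) + 1)‖ = (k : ℝ) + 1 := fun k => by
    rw [← Nat.cast_succ, Complex.norm_natCast]; simp
  have h3 : ((p.1 : ℝ) + 1) * ((p.2 : ℝ) + 1) * ‖α p‖ ^ 2
      = ‖gkDy (gkDx (gkT α)) p‖ ^ 2 / (((p.1 : ℝ) + 1) * ((p.2 : ℝ) + 1)) := by
    rw [hg, norm_mul, norm_mul, e, e]
    field_simp
  rw [h3, ← mul_div_assoc, ← mul_div_assoc, ← add_div]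
  gcongr
  rw [Pi.add_apply]
  set g := gkDy (gkDx (gkT α)) p
  set c := gkConv m m p
  have h4 : ‖g‖ ≤ ‖g + c‖ + ‖c‖ := by
    have := norm_sub_le (g + c) c
    rwa [add_sub_cancel_right] at this
  nlinarith [sq_nonneg (‖g + c‖ - ‖c‖), norm_nonneg g]

open scoped ComplexConjugate

/-! ### The generating function of the `f_j` -/

/-- Row of the double series. -/
noncomputable def gkRow (m : ℕ × ℕ → ℂ) (j : ℕ) (y : ℂ) : ℂ := ∑' k, m (j, k) * y ^ k

theorem gk_row_summable {m : ℕ × ℕ → ℂ} (hm : GkGood m) (j : ℕ) {y : ℂ} (hy : ‖y‖ < 1) :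
    Summable fun k => ‖m (j, k) * y ^ k‖ := by
  have hx : ‖(1 / 2 : ℂ)‖ < 1 := by norm_num
  have h1 := (hm.summable_norm hx hy).prod_factor j
  have h2 := h1.mul_left (‖(1 / 2 : ℂ) ^ j‖⁻¹)
  refine h2.congr fun k => ?_
  simp only [norm_mul, norm_pow]
  field_simp

theorem gk_row_hasSum {m : ℕ × ℕ → ℂ} (hm : GkGood m) {x y : ℂ} (hx : ‖x‖ < 1) (hy : ‖y‖ < 1) :
    HasSum (fun j => gkRow m j y * x ^ j) (gkEv m x y) := by
  refine (hm.summable hx hy).hasSum.prod_fiberwise fun j => ?_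
  have := (gk_row_summable hm j hy).of_norm.hasSum.mul_right (x ^ j)
  refine this.congr_fun fun k => ?_
  ring

theorem gk_row_summable_norm {m : ℕ × ℕ → ℂ} (hm : GkGood m) {x y : ℂ} (hx : ‖x‖ < 1)
    (hy : ‖y‖ < 1) : Summable (fun j => ‖gkRow m j y * x ^ j‖) := by
  refine Summable.of_nonneg_of_le (fun _ => norm_nonneg _) (fun j => ?_)
    (hm.summable_norm hx hy).prod
  have h1 := (hm.summable_norm hx hy).prod_factor j
  refine le_trans (le_of_eq ?_) (norm_tsum_le_tsum_norm h1)
  rw [gkRow, ← tsum_mul_right]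
  congr 2
  ext k
  ring

/-- The functions `f_j` in the variable `y = 1/z`. -/
noncomputable def gkf (m : ℕ × ℕ → ℂ) (j : ℕ) (y : ℂ) : ℂ := y⁻¹ ^ j + y * gkRow m j y

theorem gk_geom {x y : ℂ} (hxy : ‖x‖ < ‖y‖) : ‖y⁻¹ * x‖ < 1 := by
  have : 0 < ‖y‖ := (norm_nonneg _).trans_lt hxy
  rw [norm_mul, norm_inv, inv_mul_lt_iff₀ this]; simpa using hxy

theorem gkf_hasSum {m : ℕ × ℕ → ℂ} (hm : GkGood m) {x y : ℂ} (hxy : ‖x‖ < ‖y‖)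
    (hy : ‖y‖ < 1) : HasSum (fun j => gkf m j y * x ^ j)
      ((1 - y⁻¹ * x)⁻¹ + y * gkEv m x y) := by
  have h1 := hasSum_geometric_of_norm_lt_one (gk_geom hxy)
  have h2 := (gk_row_hasSum hm (hxy.trans hy) hy).mul_left y
  refine (h1.add h2).congr_fun fun k => ?_
  simp only [gkf, mul_pow]; ring

theorem gkf_summable_norm {m : ℕ × ℕ → ℂ} (hm : GkGood m) {x y : ℂ} (hxy : ‖x‖ < ‖y‖)
    (hy : ‖y‖ < 1) : Summable (fun j => ‖gkf m j y * x ^ j‖) := by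
  have h1 := (summable_geometric_of_lt_one (norm_nonneg _) (gk_geom hxy))
  have h2 := (gk_row_summable_norm hm (hxy.trans hy) hy).mul_left ‖y‖
  refine Summable.of_nonneg_of_le (fun _ => norm_nonneg _) (fun j => ?_) (h1.add h2)
  have : gkf m j y * x ^ j = (y⁻¹ * x) ^ j + y * (gkRow m j y * x ^ j) := by
    simp only [gkf, mul_pow]; ring
  rw [this]
  refine (norm_add_le _ _).trans ?_
  rw [norm_pow, norm_mul y]

/-- Coefficients of `h(x) - x Φ(y)`. -/
noncomputable def gkHc (φ₀ : ℂ) (c : ℕ → ℂ) (w : ℂ) : ℕ → ℂ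
  | 0 => 1
  | 1 => φ₀ - w
  | (k + 2) => c k

/-- Coefficients of `s`. -/
noncomputable def gkSig (m : ℕ × ℕ → ℂ) : ℕ → ℂ
  | 0 => 1
  | (j + 1) => - m (j, 0)

/-- Laurent expansion hypothesis in the variable `y = 1/z`. -/
def GkLaur (Φ : ℂ → ℂ) (φ₀ : ℂ) (c : ℕ → ℂ) : Prop :=
  ∀ y : ℂ, y ≠ 0 → ‖y‖ < 1 →
    Summable (fun k => ‖c k * y ^ (k + 1)‖) ∧ Φ y = y⁻¹ + φ₀ + ∑' k, c k * y ^ (k + 1)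

theorem gkHc_hasSum {Φ : ℂ → ℂ} {φ₀ : ℂ} {c : ℕ → ℂ} (hL : GkLaur Φ φ₀ c) (w : ℂ) {x : ℂ}
    (hx0 : x ≠ 0) (hx : ‖x‖ < 1) :
    HasSum (fun k => gkHc φ₀ c w k * x ^ k) (x * (Φ x - w)) ∧
      Summable (fun k => ‖gkHc φ₀ c w k * x ^ k‖) := by
  obtain ⟨h1, h2⟩ := hL x hx0 hx
  constructor
  · rw [← hasSum_nat_add_iff' 2]
    have h3 := h1.of_norm.hasSum.mul_left x
    have e : x * (Φ x - w) - ∑ i ∈ Finset.range 2, gkHc φ₀ c w i * x ^ i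
        = x * ∑' k, c k * x ^ (k + 1) := by
      simp only [Finset.sum_range_succ, Finset.sum_range_zero, gkHc, h2]
      field_simp
      ring
    rw [e]
    refine h3.congr_fun fun k => ?_
    simp only [gkHc]; ring
  · rw [← summable_nat_add_iff 2]
    refine (h1.mul_left ‖x‖).congr fun k => ?_
    rw [← norm_mul]; congr 1
    simp only [gkHc]; ring

theorem gkSig_hasSum {m : ℕ × ℕ → ℂ} (hm : GkGood m) {x : ℂ} (hx : ‖x‖ < 1) :
    HasSum (fun k => gkSig m k * x ^ k) (1 - x * gkEv m x 0) := by
  rw [← hasSum_nat_add_iff' 1]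
  have h2 := (gk_row_hasSum hm hx (y := 0) (by simp)).mul_left (-x)
  have e : 1 - x * gkEv m x 0 - ∑ i ∈ Finset.range 1, gkSig m i * x ^ i = -x * gkEv m x 0 := by
    simp [gkSig]
  rw [e]
  refine h2.congr_fun fun k => ?_
  have : gkRow m k 0 = m (k, 0) := by
    rw [gkRow, tsum_eq_single 0]
    · simp
    · intro b hb; simp [hb]
  rw [this]; simp only [gkSig]; ring

/-- `s(y) = exp(-F(y,y)/2)`. -/
noncomputable def gkS (α : ℕ × ℕ → ℂ) (y : ℂ) : ℂ := Complex.exp (-(1/2) * gkEv (gkT α) y y)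

section
variable {α : ℕ × ℕ → ℂ} {Φ : ℂ → ℂ} {m : ℕ × ℕ → ℂ} {φ₀ : ℂ} {c : ℕ → ℂ}

theorem gkS_eq (h : GkGood α) (hs : ∀ i j, α (i, j) = α (j, i))
    (hm2 : ∀ x y : ℂ, ‖x‖ < 1 → ‖y‖ < 1 →
        Complex.exp (-(1/2) * gkA α x y) = 1 + (y - x) * gkEv m x y) {x : ℂ} (hx : ‖x‖ < 1) :
    gkS α x = 1 - x * gkEv m x 0 := by
  have h1 := hm2 x 0 hx (by simp)
  rw [gkA_eq_F h hs hx (by simp)] at h1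
  simp only [gkT_ev, mul_zero, zero_mul, add_zero, sub_zero, zero_sub] at h1
  rw [gkS, gkT_ev, h1]; ring

theorem gk_gen (h : GkGood α) (hs : ∀ i j, α (i, j) = α (j, i)) (hr : GkRel α Φ)
    (hm2 : ∀ x y : ℂ, ‖x‖ < 1 → ‖y‖ < 1 →
        Complex.exp (-(1/2) * gkA α x y) = 1 + (y - x) * gkEv m x y) {x y : ℂ}
    (hx0 : x ≠ 0) (hxy : ‖x‖ < ‖y‖) (hy : ‖y‖ < 1) :
    x * (Φ x - Φ y) * ((1 - y⁻¹ * x)⁻¹ + y * gkEv m x y) = gkS α x * gkS α y := by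
  have hx := hxy.trans hy
  have hy0 : y ≠ 0 := norm_pos_iff.mp ((norm_nonneg _).trans_lt hxy)
  have hne : y - x ≠ 0 := by
    intro h0; rw [sub_eq_zero] at h0; rw [h0] at hxy; exact lt_irrefl _ hxy
  have h1 := hr x y hx0 hy0 hx hy
  have h2 := hm2 x y hx hy
  have e : (1 - y⁻¹ * x)⁻¹ + y * gkEv m x y
      = y / (y - x) * (1 + (y - x) * gkEv m x y) := by
    have : 1 - y⁻¹ * x = (y - x) / y := by field_simp
    rw [this]; field_simp
  rw [e, ← h2, h1, gkA_eq_F h hs hx hy, gkS, gkS]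
  have e2 : Complex.exp (-(1/2) * (gkEv (gkT α) x x + gkEv (gkT α) y y - 2 * gkEv (gkT α) x y))
      = Complex.exp (-(1/2) * gkEv (gkT α) x x) * Complex.exp (-(1/2) * gkEv (gkT α) y y)
        * Complex.exp (gkEv (gkT α) x y) := by
    rw [← Complex.exp_add, ← Complex.exp_add]; congr 1; ring
  have e3 : Complex.exp (-gkEv (gkT α) x y) * Complex.exp (gkEv (gkT α) x y) = 1 := by
    rw [← Complex.exp_add]; simp
  rw [e2]
  have e4 : x * (x⁻¹ - y⁻¹) * (y / (y - x)) = 1 := by field_simp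
  calc _ = (x * (x⁻¹ - y⁻¹) * (y / (y - x))) * (Complex.exp (-gkEv (gkT α) x y)
        * Complex.exp (gkEv (gkT α) x y)) * (Complex.exp (-(1/2) * gkEv (gkT α) x x) *
        Complex.exp (-(1/2) * gkEv (gkT α) y y)) := by ring
    _ = _ := by rw [e3, e4]; ring

theorem gk_coeff (h : GkGood α) (hs : ∀ i j, α (i, j) = α (j, i)) (hr : GkRel α Φ)
    (hm : GkGood m) (hm2 : ∀ x y : ℂ, ‖x‖ < 1 → ‖y‖ < 1 →
        Complex.exp (-(1/2) * gkA α x y) = 1 + (y - x) * gkEv m x y)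
    (hL : GkLaur Φ φ₀ c) {y : ℂ} (hy0 : y ≠ 0) (hy : ‖y‖ < 1) (n : ℕ) :
    ∑ i ∈ Finset.range (n + 1), gkHc φ₀ c (Φ y) i * gkf m (n - i) y = gkSig m n * gkS α y := by
  rw [← sub_eq_zero]
  refine gk_unique_one (c := fun n => ∑ i ∈ Finset.range (n + 1),
    gkHc φ₀ c (Φ y) i * gkf m (n - i) y - gkSig m n * gkS α y) (norm_pos_iff.mpr hy0) ?_ n
  intro x hx0 hxy
  have hx := hxy.trans hy
  obtain ⟨a1, a2⟩ := gkHc_hasSum hL (Φ y) hx0 hx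
  have b1 := gkf_hasSum hm hxy hy
  have b2 := gkf_summable_norm hm hxy hy
  have c1 := summable_norm_sum_mul_range_of_summable_norm a2 b2
  have c2 := tsum_mul_tsum_eq_tsum_sum_range_of_summable_norm a2 b2
  rw [a1.tsum_eq, b1.tsum_eq, gk_gen h hs hr hm2 hx0 hxy hy] at c2
  have d1 := (gkSig_hasSum hm hx).mul_right (gkS α y)
  rw [← gkS_eq h hs hm2 hx] at d1
  have d2 := c1.of_norm.hasSum.sub d1
  rw [← c2, sub_self] at d2
  refine d2.congr_fun fun k => ?_
  rw [sub_mul, Finset.sum_mul]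
  congr 1
  · refine Finset.sum_congr rfl fun i hi => ?_
    have : x ^ k = x ^ i * x ^ (k - i) := by
      rw [← pow_add]; congr 1; have := Finset.mem_range.mp hi; omega
    rw [this]; ring
  · ring

theorem gk_poly (h : GkGood α) (hs : ∀ i j, α (i, j) = α (j, i)) (hr : GkRel α Φ)
    (hm : GkGood m) (hm2 : ∀ x y : ℂ, ‖x‖ < 1 → ‖y‖ < 1 →
        Complex.exp (-(1/2) * gkA α x y) = 1 + (y - x) * gkEv m x y)
    (hL : GkLaur Φ φ₀ c) (n : ℕ) :
    ∃ P : Polynomial ℂ, P.Monic ∧ P.natDegree = n ∧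
      ∀ y : ℂ, y ≠ 0 → ‖y‖ < 1 → gkf m n y = P.eval (Φ y) * gkS α y := by
  induction n using Nat.strong_induction_on with
  | _ n ih =>
  rcases n with _ | n
  · refine ⟨1, Polynomial.monic_one, by simp, fun y hy0 hy => ?_⟩
    have := gk_coeff h hs hr hm hm2 hL hy0 hy 0
    simpa [gkHc, gkSig] using this
  · choose! P hP1 hP2 hP3 using ih
    set R : Polynomial ℂ := Polynomial.C (gkSig m (n + 1))
      - ∑ i ∈ Finset.range n, Polynomial.C (c i) * P (n + 1 - (i + 1 + 1)) with hR
    set Q : Polynomial ℂ := (Polynomial.X - Polynomial.C φ₀) * P n with hQ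
    have hQm : Q.Monic := (Polynomial.monic_X_sub_C φ₀).mul (hP1 n (by omega))
    have hQd : Q.natDegree = n + 1 := by
      rw [hQ, (Polynomial.monic_X_sub_C φ₀).natDegree_mul (hP1 n (by omega)),
        Polynomial.natDegree_X_sub_C, hP2 n (by omega), add_comm]
    have hRd : R.natDegree ≤ n := by
      refine (Polynomial.natDegree_sub_le _ _).trans (max_le (by simp) ?_)
      refine Polynomial.natDegree_sum_le_of_forall_le _ _ fun i hi => ?_
      refine (Polynomial.natDegree_C_mul_le _ _).trans ?_
      have := Finset.mem_range.mp hi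
      rw [hP2 _ (by omega)]; omega
    have hlt : R.degree < Q.degree := Polynomial.degree_lt_degree (by omega)
    refine ⟨Q + R, hQm.add_of_left hlt, ?_, ?_⟩
    · rw [Polynomial.natDegree_add_eq_left_of_degree_lt hlt, hQd]
    · intro y hy0 hy
      have key := gk_coeff h hs hr hm hm2 hL hy0 hy (n + 1)
      rw [Finset.sum_range_succ', Finset.sum_range_succ'] at key
      have e1 : ∑ i ∈ Finset.range n, gkHc φ₀ c (Φ y) (i + 1 + 1) * gkf m (n + 1 - (i + 1 + 1)) y
          = (∑ i ∈ Finset.range n, c i * (P (n + 1 - (i + 1 + 1))).eval (Φ y)) * gkS α y := by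
        rw [Finset.sum_mul]
        refine Finset.sum_congr rfl fun i hi => ?_
        rw [hP3 _ (by have := Finset.mem_range.mp hi; omega) y hy0 hy]
        simp only [gkHc]; ring
      rw [e1] at key
      simp only [gkHc, zero_add, Nat.add_sub_cancel, Nat.sub_zero, one_mul] at key
      rw [hP3 n (by omega) y hy0 hy] at key
      simp only [hQ, hR, Polynomial.eval_add, Polynomial.eval_mul, Polynomial.eval_sub,
        Polynomial.eval_X, Polynomial.eval_C, Polynomial.eval_finsetSum]
      linear_combination key

end

open scoped ComplexConjugate

/-! ### Andreief identity and Parseval -/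

theorem gk_perm_sum {n : ℕ} (G : Matrix (Fin n) (Fin n) ℂ) :
    ∑ σ : Equiv.Perm (Fin n), ∑ τ : Equiv.Perm (Fin n),
      ((Equiv.Perm.sign σ : ℤ) : ℂ) * ((Equiv.Perm.sign τ : ℤ) : ℂ) * ∏ i, G (σ i) (τ i)
      = (n.factorial : ℂ) * G.det := by
  have h : ∀ σ : Equiv.Perm (Fin n), ∑ τ : Equiv.Perm (Fin n),
      ((Equiv.Perm.sign σ : ℤ) : ℂ) * ((Equiv.Perm.sign τ : ℤ) : ℂ) * ∏ i, G (σ i) (τ i)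
      = G.det := by
    intro σ
    rw [← Matrix.det_transpose, Matrix.det_apply']
    rw [← Equiv.sum_comp (Equiv.mulRight σ)]
    refine Finset.sum_congr rfl fun τ _ => ?_
    simp only [Equiv.coe_mulRight, Matrix.transpose_apply, Equiv.Perm.sign_mul,
      Equiv.Perm.mul_apply]
    rw [← Equiv.prod_comp σ (fun i => G i (τ i))]
    congr 1
    push_cast
    have : ((Equiv.Perm.sign σ : ℤ) : ℂ) * ((Equiv.Perm.sign σ : ℤ) : ℂ) = 1 := by
      rw [← Int.cast_mul, ← Units.val_mul, Int.units_mul_self]; simp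
    linear_combination ((Equiv.Perm.sign τ : ℤ) : ℂ) * this
  rw [Finset.sum_congr rfl fun σ _ => h σ, Finset.sum_const, Finset.card_univ, Fintype.card_perm,
    Fintype.card_fin, nsmul_eq_mul]

theorem gk_andreief {n : ℕ} (ν : Measure ℝ) [SigmaFinite ν] (g : Fin n → ℝ → ℂ)
    (hI : ∀ j k, Integrable (fun t => g j t * conj (g k t)) ν) :
    ∫ θ : Fin n → ℝ, (Matrix.of fun i j => g i (θ j)).det *
        conj ((Matrix.of fun i j => g i (θ j)).det) ∂(Measure.pi fun _ => ν)
      = (n.factorial : ℂ) * (Matrix.of fun j k => ∫ t, g j t * conj (g k t) ∂ν).det := by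
  have e : ∀ θ : Fin n → ℝ, (Matrix.of fun i j => g i (θ j)).det *
        conj ((Matrix.of fun i j => g i (θ j)).det)
      = ∑ σ : Equiv.Perm (Fin n), ∑ τ : Equiv.Perm (Fin n),
      ((Equiv.Perm.sign σ : ℤ) : ℂ) * ((Equiv.Perm.sign τ : ℤ) : ℂ) *
        ∏ i, (g (σ i) (θ i) * conj (g (τ i) (θ i))) := by
    intro θ
    rw [Matrix.det_apply', map_sum, Finset.sum_mul_sum]
    refine Finset.sum_congr rfl fun σ _ => Finset.sum_congr rfl fun τ _ => ?_
    rw [map_mul, map_prod, Finset.prod_mul_distrib]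
    simp only [Matrix.of_apply, map_intCast]
    ring
  simp_rw [e]
  have hIntg : ∀ σ τ : Equiv.Perm (Fin n), Integrable (fun θ : Fin n → ℝ =>
      ∏ i, (g (σ i) (θ i) * conj (g (τ i) (θ i)))) (Measure.pi fun _ => ν) := by
    intro σ τ
    exact Integrable.fintype_prod (f := fun i t => g (σ i) t * conj (g (τ i) t))
      (fun i => hI _ _)
  rw [integral_finsetSum _ (fun σ _ => integrable_finsetSum _ fun τ _ =>
    (hIntg σ τ).const_mul _), ← gk_perm_sum]
  refine Finset.sum_congr rfl fun σ _ => ?_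
  rw [integral_finsetSum _ (fun τ _ => (hIntg σ τ).const_mul _)]
  refine Finset.sum_congr rfl fun τ _ => ?_
  rw [integral_const_mul]
  congr 1
  rw [integral_fintype_prod_eq_prod (f := fun i t => g (σ i) t * conj (g (τ i) t))]
  rfl

/-- The measure on `[-π, π]`. -/
noncomputable def gkMu : Measure ℝ := volume.restrict (Set.Icc (-Real.pi) Real.pi)

instance gkMu_finite : IsFiniteMeasure gkMu := by
  unfold gkMu; infer_instance

theorem gkMu_univ : gkMu.real Set.univ = 2 * Real.pi := by
  rw [gkMu, measureReal_restrict_apply_univ, Real.volume_real_Icc_of_le (by linarith [Real.pi_pos])]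
  ring

theorem gk_fourier (k : ℤ) : ∫ θ : ℝ, Complex.exp (Complex.I * ((k : ℂ) * (θ : ℂ))) ∂gkMu
    = if k = 0 then (2 * Real.pi : ℂ) else 0 := by
  split_ifs with h
  · subst h
    simp [gkMu_univ]
  · rw [gkMu, integral_Icc_eq_integral_Ioc, ← intervalIntegral.integral_of_le
      (by linarith [Real.pi_pos])]
    have hk : Complex.I * (k : ℂ) ≠ 0 := mul_ne_zero Complex.I_ne_zero (by exact_mod_cast h)
    simp_rw [← mul_assoc]
    rw [integral_exp_mul_complex hk]
    have : Complex.exp (Complex.I * k * (Real.pi : ℂ))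
        = Complex.exp (Complex.I * k * ((-Real.pi : ℝ) : ℂ)) := by
      rw [Complex.exp_eq_exp_iff_exists_int]
      exact ⟨k, by push_cast; ring⟩
    rw [this, sub_self, zero_div]

theorem gk_exp_norm (k : ℤ) (θ : ℝ) : ‖Complex.exp (Complex.I * ((k : ℂ) * (θ : ℂ)))‖ = 1 := by
  have : Complex.I * ((k : ℂ) * (θ : ℂ)) = (((k : ℝ) * θ : ℝ) : ℂ) * Complex.I := by
    push_cast; ring
  rw [this, Complex.norm_exp_ofReal_mul_I]

theorem gk_parseval {ι : Type} [Countable ι] [DecidableEq ι] (κ : ι → ℤ)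
    (hκ : Function.Injective κ) {u v : ι → ℂ}
    (hu : Summable fun p => ‖u p‖) (hv : Summable fun p => ‖v p‖) :
    ∫ θ : ℝ, (∑' p, u p * Complex.exp (Complex.I * ((κ p : ℂ) * (θ : ℂ)))) *
      conj (∑' p, v p * Complex.exp (Complex.I * ((κ p : ℂ) * (θ : ℂ)))) ∂gkMu
      = 2 * Real.pi * ∑' p, u p * conj (v p) := by
  set F : ι × ι → ℝ → ℂ := fun q θ => (u q.1 * conj (v q.2)) *
    Complex.exp (Complex.I * (((κ q.1 - κ q.2 : ℤ) : ℂ) * (θ : ℂ))) with hF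
  have hnorm : ∀ q θ, ‖F q θ‖ = ‖u q.1‖ * ‖v q.2‖ := by
    intro q θ
    simp only [hF]
    rw [norm_mul, gk_exp_norm, mul_one, norm_mul, RCLike.norm_conj]
  have hFi : ∀ q, Integrable (F q) gkMu := by
    intro q
    refine (integrable_const (‖u q.1‖ * ‖v q.2‖)).mono' ?_ (ae_of_all _ fun θ => (hnorm q θ).le)
    apply Continuous.aestronglyMeasurable
    fun_prop
  have hs : Summable fun q : ι × ι => ‖u q.1‖ * ‖v q.2‖ :=
    hu.mul_of_nonneg hv (fun _ => norm_nonneg _) (fun _ => norm_nonneg _)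
  have hFs : Summable fun q => ∫ θ, ‖F q θ‖ ∂gkMu := by
    refine (hs.mul_left (2 * Real.pi)).congr fun q => ?_
    simp_rw [hnorm]
    rw [integral_const, gkMu_univ, smul_eq_mul]
  have key := hasSum_integral_of_summable_integral_norm hFi hFs
  have e1 : ∀ θ : ℝ, (∑' p, u p * Complex.exp (Complex.I * ((κ p : ℂ) * (θ : ℂ)))) *
      conj (∑' p, v p * Complex.exp (Complex.I * ((κ p : ℂ) * (θ : ℂ)))) = ∑' q, F q θ := by
    intro θ
    rw [Complex.conj_tsum, tsum_mul_tsum_of_summable_norm]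
    · refine tsum_congr fun q => ?_
      simp only [hF]
      rw [map_mul, ← Complex.exp_conj]
      simp only [map_mul, Complex.conj_I, Complex.conj_ofReal, map_intCast]
      rw [mul_mul_mul_comm, ← Complex.exp_add]
      congr 2
      push_cast; ring
    · refine hu.congr fun p => ?_
      rw [norm_mul, gk_exp_norm, mul_one]
    · refine hv.congr fun p => ?_
      rw [RCLike.norm_conj, norm_mul, gk_exp_norm, mul_one]
  simp_rw [e1]
  rw [← key.tsum_eq]
  have e2 : ∀ q : ι × ι, ∫ θ, F q θ ∂gkMu
      = if q.1 = q.2 then 2 * Real.pi * (u q.1 * conj (v q.2)) else 0 := by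
    intro q
    simp only [hF]
    rw [integral_const_mul, gk_fourier]
    by_cases h : q.1 = q.2
    · rw [if_pos h, if_pos (by rw [h]; ring)]; ring
    · rw [if_neg h, if_neg (by rw [sub_eq_zero]; exact fun h' => h (hκ h')), mul_zero]
  have hsum := key.summable
  simp_rw [e2] at hsum ⊢
  rw [hsum.tsum_prod, ← tsum_mul_left]
  refine tsum_congr fun p => ?_
  rw [tsum_eq_single p]
  · simp
  · intro q hq
    simp [hq.symm]

open scoped ComplexConjugate

open scoped ComplexConjugate

/-! ### The Gram determinant formula -/

noncomputable def gkB (m : ℕ × ℕ → ℂ) (r : ℝ) (j l : ℕ) : ℂ := m (j, l) * (r : ℂ)⁻¹ ^ (j + l + 1)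

noncomputable def gkU (m : ℕ × ℕ → ℂ) (r : ℝ) (j : ℕ) : ℕ ⊕ ℕ → ℂ :=
  Sum.elim (fun i => if i = j then 1 else 0) (gkB m r j)

def gkKap : ℕ ⊕ ℕ → ℤ := Sum.elim (fun i => (i : ℤ)) (fun k => -(k : ℤ) - 1)

theorem gkKap_inj : Function.Injective gkKap := by
  rintro (i | i) (j | j) h <;> simp only [gkKap, Sum.elim_inl, Sum.elim_inr] at h
  · congr 1; omega
  · omega
  · omega
  · congr 1; omega

noncomputable def gkG (m : ℕ × ℕ → ℂ) (r : ℝ) (j : ℕ) (θ : ℝ) : ℂ :=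
  ∑' p, gkU m r j p * Complex.exp (Complex.I * ((gkKap p : ℂ) * (θ : ℂ)))

theorem gk_rinv {r : ℝ} (hr : 1 < r) : ‖(r : ℂ)⁻¹‖ < 1 := by
  rw [norm_inv, Complex.norm_real, Real.norm_of_nonneg (by linarith)]
  exact inv_lt_one_of_one_lt₀ hr

theorem gkB_summable {m : ℕ × ℕ → ℂ} (hm : GkGood m) {r : ℝ} (hr : 1 < r) (j : ℕ) :
    Summable fun l => ‖gkB m r j l‖ := by
  refine ((gk_row_summable hm j (gk_rinv hr)).mul_right ‖(r : ℂ)⁻¹ ^ (j + 1)‖).congr fun l => ?_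
  rw [← norm_mul, gkB]; congr 1; ring

theorem gkU_summable {m : ℕ × ℕ → ℂ} (hm : GkGood m) {r : ℝ} (hr : 1 < r) (j : ℕ) :
    Summable fun p => ‖gkU m r j p‖ := by
  have h1 : HasSum (fun i => ‖gkU m r j (Sum.inl i)‖) _ := hasSum_single j (fun i hi => by
    simp [gkU, hi])
  exact (HasSum.sum (f := fun p => ‖gkU m r j p‖) h1 (gkB_summable hm hr j).hasSum).summable

theorem gkU_inner {m : ℕ × ℕ → ℂ} (hm : GkGood m) {r : ℝ} (hr : 1 < r) (j k : ℕ) :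
    ∑' p, gkU m r j p * conj (gkU m r k p)
      = (if j = k then 1 else 0) + ∑' l, gkB m r j l * conj (gkB m r k l) := by
  have h1 : HasSum (fun i => gkU m r j (Sum.inl i) * conj (gkU m r k (Sum.inl i))) _ :=
    hasSum_single j (fun i hi => by simp [gkU, hi])
  have h3 : Summable fun l => gkB m r j l * conj (gkB m r k l) := by
    have hb := gkB_summable hm hr k
    refine Summable.of_norm ?_
    refine Summable.of_nonneg_of_le (fun _ => norm_nonneg _) (fun l => ?_)
      ((gkB_summable hm hr j).mul_right (∑' l, ‖gkB m r k l‖))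
    rw [norm_mul, RCLike.norm_conj]
    gcongr
    exact hb.le_tsum l (fun _ _ => norm_nonneg _)
  rw [(HasSum.sum (f := fun p => gkU m r j p * conj (gkU m r k p)) h1 h3.hasSum).tsum_eq]
  congr 1
  simp only [gkU, Sum.elim_inl, if_true, one_mul]
  split_ifs <;> simp

theorem gkG_cont {m : ℕ × ℕ → ℂ} (hm : GkGood m) {r : ℝ} (hr : 1 < r) (j : ℕ) :
    Continuous (gkG m r j) := by
  refine continuous_tsum (u := fun p => ‖gkU m r j p‖) (fun p => by fun_prop)
    (gkU_summable hm hr j) fun p θ => ?_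
  rw [norm_mul, gk_exp_norm, mul_one]

theorem gkG_int {m : ℕ × ℕ → ℂ} (hm : GkGood m) {r : ℝ} (hr : 1 < r) (j k : ℕ) :
    Integrable (fun t => gkG m r j t * conj (gkG m r k t)) gkMu := by
  have : Continuous (fun t => gkG m r j t * conj (gkG m r k t)) :=
    (gkG_cont hm hr j).mul (Complex.continuous_conj.comp (gkG_cont hm hr k))
  exact this.integrableOn_Icc

theorem gkG_eq {m : ℕ × ℕ → ℂ} (hm : GkGood m) {r : ℝ} (hr : 1 < r) (j : ℕ) (θ : ℝ) :
    gkG m r j θ = (r : ℂ)⁻¹ ^ j * gkf m j ((r : ℂ) * Complex.exp (Complex.I * (θ : ℂ)))⁻¹ := by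
  set e := Complex.exp (Complex.I * (θ : ℂ)) with he
  have he0 : e ≠ 0 := Complex.exp_ne_zero _
  have hr0 : (r : ℂ) ≠ 0 := by exact_mod_cast (by linarith : r ≠ 0)
  have hex : ∀ k : ℤ, Complex.exp (Complex.I * ((k : ℂ) * (θ : ℂ))) = e ^ k := by
    intro k
    rw [he, ← Complex.exp_int_mul]; congr 1; ring
  have hen : ‖e‖ = 1 := by
    have := gk_exp_norm 1 θ
    rwa [hex, zpow_one] at this
  have hy : ‖((r : ℂ) * e)⁻¹‖ < 1 := by
    rw [mul_inv, norm_mul, norm_inv e, hen, inv_one, mul_one]; exact gk_rinv hr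
  have h1 : HasSum (fun i => gkU m r j (Sum.inl i) *
      Complex.exp (Complex.I * ((gkKap (Sum.inl i) : ℂ) * (θ : ℂ)))) _ :=
    hasSum_single j (fun i hi => by simp [gkU, hi])
  have h2 := (gk_row_summable hm j hy).of_norm.hasSum.mul_left
    ((r : ℂ)⁻¹ ^ j * ((r : ℂ) * e)⁻¹)
  have h3 : HasSum (fun i => gkU m r j (Sum.inr i) *
      Complex.exp (Complex.I * ((gkKap (Sum.inr i) : ℂ) * (θ : ℂ))))
      ((r : ℂ)⁻¹ ^ j * ((r : ℂ) * e)⁻¹ * ∑' k, m (j, k) * ((r : ℂ) * e)⁻¹ ^ k) := by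
    refine h2.congr_fun fun l => ?_
    rw [hex]
    simp only [gkU, gkKap, Sum.elim_inr, gkB]
    have : e ^ (-(l : ℤ) - 1) = e⁻¹ ^ (l + 1) := by
      rw [← zpow_natCast, inv_zpow', ]; congr 1; push_cast; ring
    rw [this, mul_inv, mul_pow]
    ring
  rw [gkG, (HasSum.sum (f := fun p => gkU m r j p *
      Complex.exp (Complex.I * ((gkKap p : ℂ) * (θ : ℂ)))) h1 h3).tsum_eq, hex, gkf, gkRow, mul_add,
      inv_inv, mul_pow]
  congr 1
  · simp only [gkU, gkKap, Sum.elim_inl, if_true, one_mul, zpow_natCast]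
    rw [← mul_assoc, ← mul_pow, inv_mul_cancel₀ hr0, one_pow, one_mul]
  · ring

theorem gk_deriv_norm {α : ℕ × ℕ → ℂ} (h : GkGood α) {φ : ℂ → ℂ}
    (hr : GkRel α (fun x => φ x⁻¹)) {z : ℂ} (hz : 1 < ‖z‖) :
    ‖deriv φ z‖ = ‖gkS α z⁻¹‖ ^ 2 := by
  have hz0 : z ≠ 0 := norm_pos_iff.mp (by linarith)
  have hy : ‖z⁻¹‖ < 1 := by rw [norm_inv]; exact inv_lt_one_of_one_lt₀ hz
  have h1 := gk_deriv_rel h hr (inv_ne_zero hz0) (inv_ne_zero hz0) hy hy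
  have h2 := h1.comp z (hasDerivAt_inv hz0)
  have h3 : ((fun x => φ x⁻¹) ∘ fun w => w⁻¹) = φ := by ext w; simp
  rw [show ((fun x => φ x⁻¹) ∘ Inv.inv) = φ from h3] at h2
  rw [h2.deriv, ← norm_pow, gkS, ← Complex.exp_nat_mul]
  congr 1
  have e1 : ((2 : ℕ) : ℂ) * (-(1/2) * gkEv (gkT α) z⁻¹ z⁻¹) = -gkEv (gkT α) z⁻¹ z⁻¹ := by
    push_cast; ring
  rw [e1]
  field_simp
  ring

theorem gk_vand {n : ℕ} (v : Fin n → ℂ) :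
    ∏ p ∈ Finset.univ.filter (fun p : Fin n × Fin n => p.1 < p.2), ‖v p.1 - v p.2‖ ^ 2
      = ‖(Matrix.vandermonde v).det‖ ^ 2 := by
  rw [Matrix.det_vandermonde, Finset.prod_filter, Fintype.prod_prod_type, norm_prod,
    ← Finset.prod_pow]
  refine Finset.prod_congr rfl fun i _ => ?_
  rw [norm_prod, ← Finset.prod_pow, ← Finset.filter_lt_eq_Ioi, Finset.prod_filter]
  refine Finset.prod_congr rfl fun j _ => ?_
  simp only [norm_sub_rev]

theorem gk_rprod {r : ℝ} (n : ℕ) :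
    (∏ i : Fin n, r⁻¹ ^ (i : ℕ)) ^ 2 = (r ^ (n * (n - 1)))⁻¹ := by
  rw [Fin.prod_univ_eq_prod_range (fun i => r⁻¹ ^ i), Finset.prod_pow_eq_pow_sum, ← pow_mul,
    Finset.sum_range_id_mul_two, inv_pow]

section
variable {α : ℕ × ℕ → ℂ} {φ : ℂ → ℂ} {m : ℕ × ℕ → ℂ} {φ₀ : ℂ} {c : ℕ → ℂ}

theorem gk_integrand (h : GkGood α) (hs : ∀ i j, α (i, j) = α (j, i))
    (hr : GkRel α (fun x => φ x⁻¹))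
    (hm : GkGood m) (hm2 : ∀ x y : ℂ, ‖x‖ < 1 → ‖y‖ < 1 →
        Complex.exp (-(1/2) * gkA α x y) = 1 + (y - x) * gkEv m x y)
    (hL : GkLaur (fun x => φ x⁻¹) φ₀ c) {r : ℝ} (hr1 : 1 < r) (n : ℕ) (θ : Fin n → ℝ) :
    (r ^ (n * (n - 1)))⁻¹ * ((∏ p ∈ Finset.univ.filter (fun p : Fin n × Fin n => p.1 < p.2),
        norm (φ ((r : ℂ) * Complex.exp (Complex.I * (θ p.1 : ℂ)))
          - φ ((r : ℂ) * Complex.exp (Complex.I * (θ p.2 : ℂ)))) ^ 2) *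
      ∏ μ, norm (deriv φ ((r : ℂ) * Complex.exp (Complex.I * (θ μ : ℂ)))))
    = ‖(Matrix.of fun i j : Fin n => gkG m r i (θ j)).det‖ ^ 2 := by
  set z : Fin n → ℂ := fun i => (r : ℂ) * Complex.exp (Complex.I * (θ i : ℂ)) with hz
  have hz1 : ∀ i, 1 < ‖z i‖ := by
    intro i
    have := gk_exp_norm 1 (θ i)
    rw [Int.cast_one, one_mul] at this
    simp only [hz]
    rw [norm_mul, this, mul_one, Complex.norm_real, Real.norm_of_nonneg (by linarith)]
    exact hr1
  have hz0 : ∀ i, z i ≠ 0 := fun i => norm_pos_iff.mp (by linarith [hz1 i])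
  have hzi : ∀ i, ‖(z i)⁻¹‖ < 1 := fun i => by
    rw [norm_inv]; exact inv_lt_one_of_one_lt₀ (hz1 i)
  choose P hP1 hP2 hP3 using gk_poly h hs hr hm hm2 hL
  have e1 : (Matrix.of fun i j : Fin n => gkG m r i (θ j))
      = Matrix.of fun i j : Fin n => ((r : ℂ)⁻¹ ^ (i : ℕ)) * (Matrix.of fun i j : Fin n =>
        gkS α (z j)⁻¹ * (Matrix.of fun i j : Fin n => (P j).eval (φ (z i))).transpose i j) i j := by
    ext i j
    simp only [Matrix.of_apply, Matrix.transpose_apply]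
    rw [gkG_eq hm hr1, hP3 i (z j)⁻¹ (inv_ne_zero (hz0 j)) (hzi j), inv_inv]
    ring
  rw [e1, Matrix.det_mul_column, Matrix.det_mul_row, Matrix.det_transpose,
    ← Matrix.det_eval_matrixOfPolynomials_eq_det_vandermonde (fun i => φ (z i)) (fun j => P j)
      (fun i => hP2 i) (fun i => hP1 i), norm_mul, norm_mul, mul_pow, mul_pow,
    ← gk_vand (fun i => φ (z i)), norm_prod, norm_prod, ← Finset.prod_pow _ 2 (fun i => ‖gkS α (z i)⁻¹‖)]
  rw [Finset.prod_congr rfl fun i _ => gk_deriv_norm h hr (hz1 i)]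
  have e2 : ∀ i : Fin n, ‖(r : ℂ)⁻¹ ^ (i : ℕ)‖ = r⁻¹ ^ (i : ℕ) := fun i => by
    rw [norm_pow, norm_inv, Complex.norm_real, Real.norm_of_nonneg (by linarith)]
  rw [Finset.prod_congr rfl fun i _ => e2 i, gk_rprod]
  ring

/-- The Gram perturbation. -/
noncomputable def gkX (m : ℕ × ℕ → ℂ) (r : ℝ) (n : ℕ) : Matrix (Fin n) (Fin n) ℂ :=
  Matrix.of fun j k => ∑' l, gkB m r j l * conj (gkB m r k l)

theorem gk_Zn (h : GkGood α) (hs : ∀ i j, α (i, j) = α (j, i))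
    (hr : GkRel α (fun x => φ x⁻¹))
    (hm : GkGood m) (hm2 : ∀ x y : ℂ, ‖x‖ < 1 → ‖y‖ < 1 →
        Complex.exp (-(1/2) * gkA α x y) = 1 + (y - x) * gkEv m x y)
    (hL : GkLaur (fun x => φ x⁻¹) φ₀ c) {r : ℝ} (hr1 : 1 < r) (n : ℕ) :
    ((Zn φ n r / (2 * Real.pi) ^ n : ℝ) : ℂ) = (1 + gkX m r n).det := by
  have hfac : (n.factorial : ℂ) ≠ 0 := by exact_mod_cast n.factorial_ne_zero
  have hpi : (2 * Real.pi : ℂ) ^ n ≠ 0 := by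
    apply pow_ne_zero; exact_mod_cast Real.two_pi_pos.ne'
  have hA := gk_andreief gkMu (fun i : Fin n => gkG m r i) (fun j k => gkG_int hm hr1 j k)
  have e0 : ∀ θ : Fin n → ℝ, (Matrix.of fun i j : Fin n => gkG m r i (θ j)).det *
        conj ((Matrix.of fun i j : Fin n => gkG m r i (θ j)).det)
      = ((‖(Matrix.of fun i j : Fin n => gkG m r i (θ j)).det‖ ^ 2 : ℝ) : ℂ) := fun θ => by
    rw [Complex.mul_conj']; push_cast; rfl
  simp_rw [e0] at hA
  rw [integral_complex_ofReal] at hA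
  have e1 : Zn φ n r = (n.factorial : ℝ)⁻¹ * ∫ θ : Fin n → ℝ,
      ‖(Matrix.of fun i j : Fin n => gkG m r i (θ j)).det‖ ^ 2 ∂(Measure.pi fun _ => gkMu) := by
    have em : (volume : Measure (Fin n → ℝ)).restrict
        (Set.pi Set.univ (fun _ : Fin n => Set.Icc (-Real.pi) Real.pi))
        = Measure.pi fun _ => gkMu := by
      rw [volume_pi, Measure.restrict_pi_pi]; rfl
    rw [Zn, em, one_div, mul_inv, mul_assoc, ← integral_const_mul]
    congr 2
    ext θ
    exact gk_integrand h hs hr hm hm2 hL hr1 n θ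
  have e2 : (Matrix.of fun j k : Fin n => ∫ t, gkG m r j t * conj (gkG m r k t) ∂gkMu)
      = (2 * Real.pi : ℂ) • (1 + gkX m r n) := by
    ext j k
    simp only [Matrix.of_apply, gkG]
    rw [gk_parseval gkKap gkKap_inj (gkU_summable hm hr1 j) (gkU_summable hm hr1 k),
      gkU_inner hm hr1]
    simp [gkX, Matrix.one_apply, Fin.ext_iff]
  rw [e2, Matrix.det_smul, Fintype.card_fin] at hA
  rw [e1]
  push_cast at hA ⊢
  rw [hA]
  field_simp

end

open scoped ComplexConjugate
open scoped ComplexOrder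

/-! ### Limits of the Gram determinants -/

theorem gk_prod_lower {ι : Type*} (s : Finset ι) (f : ι → ℝ) (hf : ∀ i, 0 ≤ f i) :
    1 + ∑ i ∈ s, f i ≤ ∏ i ∈ s, (1 + f i) := by
  classical
  induction s using Finset.induction_on with
  | empty => simp
  | insert a s ha ih =>
    rw [Finset.sum_insert ha, Finset.prod_insert ha]
    have h1 : 0 ≤ ∑ i ∈ s, f i := Finset.sum_nonneg fun i _ => hf i
    nlinarith [hf a, mul_nonneg (hf a) h1]

theorem gk_prod_upper {ι : Type*} (s : Finset ι) (f : ι → ℝ) (hf : ∀ i, 0 ≤ f i) :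
    ∏ i ∈ s, (1 + f i) ≤ Real.exp (∑ i ∈ s, f i) := by
  rw [Real.exp_sum]
  refine Finset.prod_le_prod (fun i _ => by linarith [hf i]) fun i _ => ?_
  linarith [Real.add_one_le_exp (f i)]

theorem gk_psd_det {n : ℕ} {X : Matrix (Fin n) (Fin n) ℂ} (hX : X.PosSemidef) {T : ℝ}
    (hT : X.trace = (T : ℂ)) :
    ∃ d : ℝ, (1 + X).det = (d : ℂ) ∧ 1 + T ≤ d ∧ d ≤ Real.exp T := by
  have hH := hX.isHermitian
  set ev := hH.eigenvalues with hev
  have h0 : ∀ i, 0 ≤ ev i := hX.eigenvalues_nonneg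
  have htr : T = ∑ i, ev i := by
    have := hH.trace_eq_sum_eigenvalues
    rw [hT] at this
    have h2 : (T : ℂ) = ((∑ i, ev i : ℝ) : ℂ) := by rw [this]; push_cast; rfl
    exact_mod_cast h2
  refine ⟨∏ i, (1 + ev i), ?_, ?_, ?_⟩
  · have h1 := X.eval_charpoly (-1)
    rw [hH.charpoly_eq, Polynomial.eval_prod] at h1
    have h2 : Matrix.scalar (Fin n) (-1 : ℂ) - X = -(1 + X) := by
      rw [map_neg, map_one]; abel
    rw [h2, Matrix.det_neg, Fintype.card_fin] at h1
    have h3 : ∀ i : Fin n, Polynomial.eval (-1 : ℂ)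
        (Polynomial.X - Polynomial.C ((hH.eigenvalues i : ℝ) : ℂ)) = -1 * (1 + (ev i : ℂ)) := by
      intro i
      rw [Polynomial.eval_sub, Polynomial.eval_X, Polynomial.eval_C]; ring
    have h4 : ∏ i : Fin n, (-1 * (1 + (ev i : ℂ))) = (-1) ^ n * (1 + X).det := by
      rw [← h1]; exact Finset.prod_congr rfl fun i _ => (h3 i).symm
    rw [Finset.prod_mul_distrib, Finset.prod_const, Finset.card_univ, Fintype.card_fin] at h4
    rw [← mul_left_cancel₀ (pow_ne_zero n (by norm_num)) h4]
    push_cast; rfl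
  · rw [htr]; exact gk_prod_lower _ _ h0
  · rw [htr]; exact gk_prod_upper _ _ h0

theorem gk_l2_mul {u v : ℕ → ℂ} (hu : Summable fun l => ‖u l‖ ^ 2)
    (hv : Summable fun l => ‖v l‖ ^ 2) : Summable fun l => ‖u l * conj (v l)‖ := by
  refine Summable.of_nonneg_of_le (fun _ => norm_nonneg _) (fun l => ?_) (hu.add hv)
  rw [norm_mul, RCLike.norm_conj]
  nlinarith [sq_nonneg (‖u l‖ - ‖v l‖), sq_nonneg (‖u l‖ + ‖v l‖)]

theorem gkX_psd {m : ℕ × ℕ → ℂ} {r : ℝ} {n : ℕ}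
    (h : ∀ j < n, Summable fun l => ‖gkB m r j l‖ ^ 2) : (gkX m r n).PosSemidef := by
  have hs : ∀ j k : Fin n, Summable fun l => gkB m r j l * conj (gkB m r k l) :=
    fun j k => (gk_l2_mul (h j j.2) (h k k.2)).of_norm
  rw [Matrix.posSemidef_iff_dotProduct_mulVec]
  constructor
  · ext j k
    simp only [gkX, Matrix.conjTranspose_apply, Matrix.of_apply]
    rw [Complex.star_def, Complex.conj_tsum]
    refine tsum_congr fun l => ?_
    rw [map_mul, Complex.conj_conj, mul_comm]
  · intro x
    have h1 : HasSum (fun l => ∑ j : Fin n, ∑ k : Fin n,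
        star (x j) * ((gkB m r j l * conj (gkB m r k l)) * x k))
        (∑ j : Fin n, ∑ k : Fin n,
          star (x j) * ((∑' l, gkB m r j l * conj (gkB m r k l)) * x k)) :=
      hasSum_sum fun j _ => hasSum_sum fun k _ => ((hs j k).hasSum.mul_right (x k)).mul_left _
    have e1 : ∀ l, (∑ j : Fin n, ∑ k : Fin n,
        star (x j) * ((gkB m r j l * conj (gkB m r k l)) * x k)) =
        (∑ j : Fin n, star (x j) * gkB m r j l) * conj (∑ j : Fin n, star (x j) * gkB m r j l) := by
      intro l
      rw [map_sum, Finset.sum_mul_sum]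
      refine Finset.sum_congr rfl fun j _ => Finset.sum_congr rfl fun k _ => ?_
      rw [map_mul, Complex.star_def, Complex.conj_conj]; ring
    have e2 : (∑ j : Fin n, ∑ k : Fin n,
          star (x j) * ((∑' l, gkB m r j l * conj (gkB m r k l)) * x k)) =
          star x ⬝ᵥ (gkX m r n).mulVec x := by
      simp only [dotProduct, Matrix.mulVec, gkX, Matrix.of_apply, Pi.star_apply, Finset.mul_sum]
    have e : HasSum (fun l => (∑ j : Fin n, star (x j) * gkB m r j l) *
        conj (∑ j : Fin n, star (x j) * gkB m r j l)) (star x ⬝ᵥ (gkX m r n).mulVec x) := by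
      rw [← e2, ← funext e1]; exact h1
    rw [← e.tsum_eq]
    refine tsum_nonneg fun l => ?_
    rw [Complex.mul_conj]
    exact_mod_cast Complex.normSq_nonneg _

/-- The trace. -/
noncomputable def gkTr (m : ℕ × ℕ → ℂ) (r : ℝ) (n : ℕ) : ℝ :=
  ∑ j ∈ Finset.range n, ∑' l, ‖gkB m r j l‖ ^ 2

theorem gkX_trace (m : ℕ × ℕ → ℂ) (r : ℝ) (n : ℕ) : (gkX m r n).trace = (gkTr m r n : ℂ) := by
  rw [gkTr, ← Fin.sum_univ_eq_sum_range (fun j => ∑' l, ‖gkB m r j l‖ ^ 2)]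
  simp only [Matrix.trace, Matrix.diag, gkX, Matrix.of_apply]
  push_cast
  refine Finset.sum_congr rfl fun j _ => tsum_congr fun l => ?_
  rw [Complex.mul_conj']

theorem gk_det_bounds {m : ℕ × ℕ → ℂ} {r : ℝ} {n : ℕ}
    (h : ∀ j < n, Summable fun l => ‖gkB m r j l‖ ^ 2) :
    1 + gkTr m r n ≤ (1 + gkX m r n).det.re ∧ (1 + gkX m r n).det.re ≤ Real.exp (gkTr m r n) := by
  obtain ⟨d, h1, h2, h3⟩ := gk_psd_det (gkX_psd h) (gkX_trace m r n)
  rw [h1, Complex.ofReal_re]; exact ⟨h2, h3⟩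

theorem gkB_one (m : ℕ × ℕ → ℂ) (j l : ℕ) : gkB m 1 j l = m (j, l) := by simp [gkB]

theorem gkB_norm_le (m : ℕ × ℕ → ℂ) {r : ℝ} (hr : 1 < r) (j l : ℕ) :
    ‖gkB m r j l‖ ≤ ‖m (j, l)‖ := by
  rw [gkB, norm_mul, norm_pow]
  exact mul_le_of_le_one_right (norm_nonneg _) (pow_le_one₀ (norm_nonneg _) (gk_rinv hr).le)

theorem gkB_sq_summable {m : ℕ × ℕ → ℂ} (hm : GkGood m) {r : ℝ} (hr : 1 < r) (j : ℕ) :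
    Summable fun l => ‖gkB m r j l‖ ^ 2 := by
  have hb := gkB_summable hm hr j
  refine Summable.of_nonneg_of_le (fun _ => by positivity) (fun l => ?_)
      (hb.mul_right (∑' l, ‖gkB m r j l‖))
  rw [sq]
  gcongr
  exact hb.le_tsum l (fun _ _ => norm_nonneg _)

theorem gkB_tendsto (m : ℕ × ℕ → ℂ) (j l : ℕ) :
    Tendsto (fun r : ℝ => gkB m r j l) (nhdsWithin 1 (Set.Ioi 1)) (nhds (gkB m 1 j l)) := by
  have : ContinuousAt (fun r : ℝ => gkB m r j l) 1 := by
    unfold gkB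
    have h1 : ContinuousAt (fun r : ℝ => (r : ℂ)⁻¹) 1 :=
      ContinuousAt.inv₀ Complex.continuous_ofReal.continuousAt (by simp)
    exact continuousAt_const.mul (h1.pow _)
  exact this.tendsto.mono_left nhdsWithin_le_nhds

theorem gk_lim_fin {m : ℕ × ℕ → ℂ} {n : ℕ} (h : ∀ j < n, Summable fun l => ‖m (j, l)‖ ^ 2) :
    Tendsto (fun r : ℝ => (1 + gkX m r n).det) (nhdsWithin 1 (Set.Ioi 1))
      (nhds (1 + gkX m 1 n).det) := by
  have hX : Tendsto (fun r : ℝ => gkX m r n) (nhdsWithin 1 (Set.Ioi 1)) (nhds (gkX m 1 n)) := by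
    refine tendsto_pi_nhds.mpr fun j => tendsto_pi_nhds.mpr fun k => ?_
    simp only [gkX, Matrix.of_apply]
    refine tendsto_tsum_of_dominated_convergence (gk_l2_mul (h j j.2) (h k k.2)) (fun l => ?_) ?_
    · exact (gkB_tendsto m j l).mul ((Complex.continuous_conj.tendsto _).comp (gkB_tendsto m k l))
    · filter_upwards [self_mem_nhdsWithin] with r hr l
      rw [norm_mul, norm_mul, RCLike.norm_conj, RCLike.norm_conj]
      gcongr
      · exact gkB_norm_le m hr _ _
      · exact gkB_norm_le m hr _ _
  have hc : Continuous fun X : Matrix (Fin n) (Fin n) ℂ => (1 + X).det :=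
    (continuous_const.add continuous_id).matrix_det
  exact (hc.tendsto _).comp hX

theorem gk_lim_inf {m : ℕ × ℕ → ℂ} (hm : GkGood m) {n j : ℕ} (hj : j < n)
    (h : ¬ Summable fun l => ‖m (j, l)‖ ^ 2) :
    Tendsto (fun r : ℝ => (1 + gkX m r n).det.re) (nhdsWithin 1 (Set.Ioi 1)) atTop := by
  rw [tendsto_atTop]
  intro C
  rw [not_summable_iff_tendsto_nat_atTop_of_nonneg (fun _ => by positivity)] at h
  obtain ⟨L, hL⟩ := (h.eventually_gt_atTop C).exists
  have h1 : Tendsto (fun r : ℝ => ∑ l ∈ Finset.range L, ‖gkB m r j l‖ ^ 2)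
      (nhdsWithin 1 (Set.Ioi 1)) (nhds (∑ l ∈ Finset.range L, ‖m (j, l)‖ ^ 2)) := by
    refine tendsto_finsetSum _ fun l _ => ?_
    have := (gkB_tendsto m j l).norm.pow 2
    rwa [gkB_one] at this
  filter_upwards [h1.eventually (lt_mem_nhds hL), self_mem_nhdsWithin] with r hr hr1
  have h2 := (gk_det_bounds (n := n) (fun j _ => gkB_sq_summable hm hr1 j)).1
  have h3 : ∑ l ∈ Finset.range L, ‖gkB m r j l‖ ^ 2 ≤ ∑' l, ‖gkB m r j l‖ ^ 2 :=
    (gkB_sq_summable hm hr1 j).sum_le_tsum _ (fun _ _ => by positivity)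
  have h4 : ∑' l, ‖gkB m r j l‖ ^ 2 ≤ gkTr m r n :=
    Finset.single_le_sum (f := fun j => ∑' l, ‖gkB m r j l‖ ^ 2)
      (fun _ _ => tsum_nonneg fun _ => by positivity) (Finset.mem_range.mpr hj)
  linarith

open Classical in
/-- The limit values. -/
noncomputable def gkZt (m : ℕ × ℕ → ℂ) (n : ℕ) : ℝ≥0∞ :=
  if ∀ j < n, Summable fun l => ‖m (j, l)‖ ^ 2 then ENNReal.ofReal (1 + gkX m 1 n).det.re else ⊤

theorem gk_bounds_one {m : ℕ × ℕ → ℂ} {n : ℕ} (h : ∀ j < n, Summable fun l => ‖m (j, l)‖ ^ 2) :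
    1 + gkTr m 1 n ≤ (1 + gkX m 1 n).det.re ∧ (1 + gkX m 1 n).det.re ≤ Real.exp (gkTr m 1 n) :=
  gk_det_bounds (fun j hj => by simpa only [gkB_one] using h j hj)

theorem gkTr_nonneg (m : ℕ × ℕ → ℂ) (r : ℝ) (n : ℕ) : 0 ≤ gkTr m r n :=
  Finset.sum_nonneg fun _ _ => tsum_nonneg fun _ => by positivity

theorem gkZt_pos (m : ℕ × ℕ → ℂ) (n : ℕ) : 0 < gkZt m n := by
  unfold gkZt
  split_ifs with h
  · rw [ENNReal.ofReal_pos]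
    linarith [(gk_bounds_one h).1, gkTr_nonneg m 1 n]
  · exact ENNReal.zero_lt_top

theorem gkZt_tendsto {m : ℕ × ℕ → ℂ} (hm : GkGood m) (n : ℕ) :
    Tendsto (fun r : ℝ => ENNReal.ofReal (1 + gkX m r n).det.re) (nhdsWithin 1 (Set.Ioi 1))
      (nhds (gkZt m n)) := by
  unfold gkZt
  split_ifs with h
  · exact (ENNReal.continuous_ofReal.tendsto _).comp
      ((Complex.continuous_re.tendsto _).comp (gk_lim_fin h))
  · push Not at h
    obtain ⟨j, hj, h⟩ := h
    exact ENNReal.tendsto_ofReal_atTop.comp (gk_lim_inf hm hj h)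

theorem gkZt_limsup (m : ℕ × ℕ → ℂ) :
    (Summable fun p => ‖m p‖ ^ 2) ↔ limsup (gkZt m) atTop < ⊤ := by
  have hp := summable_prod_of_nonneg (f := fun p : ℕ × ℕ => ‖m p‖ ^ 2) (fun p => by positivity)
  constructor
  · intro h
    obtain ⟨h1, h2⟩ := hp.mp h
    refine lt_of_le_of_lt (limsup_le_of_le (a := ENNReal.ofReal
      (Real.exp (∑' j, ∑' l, ‖m (j, l)‖ ^ 2))) (h := Eventually.of_forall fun n => ?_))
      ENNReal.ofReal_lt_top
    rw [gkZt, if_pos (fun j _ => h1 j)]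
    refine ENNReal.ofReal_le_ofReal ((gk_bounds_one (fun j _ => h1 j)).2.trans ?_)
    rw [Real.exp_le_exp, gkTr]
    simp only [gkB_one]
    exact h2.sum_le_tsum _ (fun _ _ => tsum_nonneg fun _ => by positivity)
  · intro h
    obtain ⟨C, hC1, hC2⟩ := exists_between h
    have hev := eventually_lt_of_limsup_lt hC1
    have key : ∀ᶠ n in atTop, (∀ j < n, Summable fun l => ‖m (j, l)‖ ^ 2) ∧
        gkTr m 1 n ≤ C.toReal := by
      filter_upwards [hev] with n hn
      rw [gkZt] at hn
      split_ifs at hn with h1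
      · refine ⟨h1, ?_⟩
        have := (gk_bounds_one h1).1
        have h2 := (ENNReal.ofReal_lt_iff_lt_toReal
          (by linarith [gkTr_nonneg m 1 n]) hC2.ne).mp hn
        linarith
      · exact absurd hn (not_lt.mpr le_top)
    obtain ⟨N, hN⟩ := eventually_atTop.mp key
    refine hp.mpr ⟨fun j => (hN (max N (j + 1)) (le_max_left _ _)).1 j
      (lt_of_lt_of_le (Nat.lt_succ_self j) (le_max_right _ _)), ?_⟩
    refine summable_of_sum_range_le (c := C.toReal) (fun _ => tsum_nonneg fun _ => by positivity)
      fun n => ?_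
    refine le_trans ?_ (hN (max N n) (le_max_left _ _)).2
    rw [gkTr]
    simp only [gkB_one]
    exact Finset.sum_le_sum_of_subset_of_nonneg (Finset.range_mono (le_max_right _ _))
      (fun _ _ _ => tsum_nonneg fun _ => by positivity)

theorem gk_zpow (x : ℂ) (k : ℕ) : (x⁻¹) ^ (-(k : ℤ) - 1) = x ^ (k + 1) := by
  rw [show (-(k : ℤ) - 1) = -((k + 1 : ℕ) : ℤ) by push_cast; ring, inv_zpow', neg_neg, zpow_natCast]

theorem gk_one_lt {x : ℂ} (hx : x ≠ 0) (h : ‖x‖ < 1) : 1 < ‖x⁻¹‖ := by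
  rw [norm_inv]; exact (one_lt_inv₀ (norm_pos_iff.mpr hx)).mpr h

end GkHelpers

/-- For a univalent `φ` on the exterior disk with hydrodynamic
normalization (so the associated curve has capacity 1) and Grunsky coefficients
`a_{kℓ}`, for each `n ≥ 1` the limit `Z̃_n = lim_{r→1+} Z_n(r)/(2π)^n` exists in
`(0, ∞]`, and the curve is a Weil–Petersson quasicircle (`∑ kℓ|a_{kℓ}|² < ∞`) if and
only if `limsup_{n→∞} Z̃_n < ∞`. -/
theorem stmt16 (φ : ℂ → ℂ) (φ₀ : ℂ) (c : ℕ → ℂ) (a : ℕ → ℕ → ℂ)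
    (hφ : DifferentiableOn ℂ φ {z : ℂ | 1 < norm z})
    (hinj : Set.InjOn φ {z : ℂ | 1 < norm z})
    (hLaurent : ∀ z : ℂ, 1 < norm z →
      Summable (fun k : ℕ => norm (c k * z ^ (-(k : ℤ) - 1))) ∧
      φ z = z + φ₀ + ∑' k : ℕ, c k * z ^ (-(k : ℤ) - 1))
    (hsym : ∀ k l, a k l = a l k)
    (hGrunsky : ∀ z ζ : ℂ, 1 < norm z → 1 < norm ζ →
      Summable (fun p : ℕ × ℕ =>
        norm (a (p.1 + 1) (p.2 + 1) * ζ ^ (-(p.1 : ℤ) - 1) * z ^ (-(p.2 : ℤ) - 1))) ∧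
      φ ζ - φ z = (ζ - z) * Complex.exp
        (-∑' p : ℕ × ℕ, a (p.1 + 1) (p.2 + 1) * ζ ^ (-(p.1 : ℤ) - 1) * z ^ (-(p.2 : ℤ) - 1))) :
    ∃ Zt : ℕ → ℝ≥0∞,
      (∀ n : ℕ, 1 ≤ n → 0 < Zt n ∧
        Tendsto (fun r : ℝ => ENNReal.ofReal (Zn φ n r / (2 * Real.pi) ^ n))
          (nhdsWithin 1 (Set.Ioi 1)) (nhds (Zt n))) ∧
      (Summable (fun p : ℕ × ℕ =>
          (((p.1 + 1) * (p.2 + 1) : ℕ) : ℝ) * norm (a (p.1 + 1) (p.2 + 1)) ^ 2)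
        ↔ Filter.limsup Zt atTop < ⊤) := by
  set α : ℕ × ℕ → ℂ := fun p => a (p.1 + 1) (p.2 + 1) with hα
  have hs : ∀ i j, α (i, j) = α (j, i) := fun i j => hsym _ _
  have hg : GkGood α := by
    refine GkGood.of_summable fun ρ h0 h1 => ?_
    have hρ : (ρ : ℂ) ≠ 0 := by exact_mod_cast h0.ne'
    have hn : ‖(ρ : ℂ)‖ = ρ := by rw [Complex.norm_real, Real.norm_of_nonneg h0.le]
    have h2 := gk_one_lt hρ (by rw [hn]; exact h1)
    have h3 := ((hGrunsky _ _ h2 h2).1).mul_right ((ρ ^ 2)⁻¹)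
    refine h3.congr fun p => ?_
    rw [gk_zpow, gk_zpow, norm_mul, norm_mul, norm_pow, norm_pow, hn]
    simp only [hα]
    field_simp
    try ring
  have hr : GkRel α (fun x => φ x⁻¹) := by
    intro x y hx hy hx1 hy1
    have h := (hGrunsky _ _ (gk_one_lt hy hy1) (gk_one_lt hx hx1)).2
    rw [gkT_ev, gkEv, ← tsum_mul_left]
    refine h.trans ?_
    congr 3
    refine tsum_congr fun p => ?_
    rw [gk_zpow, gk_zpow]
    simp only [hα]
    ring
  have hL : GkLaur (fun x => φ x⁻¹) φ₀ c := by
    intro y hy hy1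
    have h := hLaurent _ (gk_one_lt hy hy1)
    simpa only [gk_zpow] using h
  obtain ⟨m, hm, hm2, hm3⟩ := gk_m_exists hg
  refine ⟨gkZt m, fun n _ => ⟨gkZt_pos m n, ?_⟩, ?_⟩
  · refine (gkZt_tendsto hm n).congr' ?_
    filter_upwards [self_mem_nhdsWithin] with r hr1
    have h := congrArg Complex.re (gk_Zn hg hs hr hm hm2 hL (Set.mem_Ioi.mp hr1) n)
    rw [Complex.ofReal_re] at h
    rw [h]
  · rw [← gkZt_limsup]
    have e : Summable (fun p : ℕ × ℕ =>
          (((p.1 + 1) * (p.2 + 1) : ℕ) : ℝ) * norm (a (p.1 + 1) (p.2 + 1)) ^ 2) ↔ GkHS α := by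
      refine summable_congr fun p => ?_
      push_cast
      rfl
    rw [e]
    exact ⟨hm3, gk_m_imp_HS hg hs hr hm hm2⟩
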